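/- arXiv:1809.08539 — 2 statements merged into one kernel-verified Lean document; each statement's English description precedes it below -/
import Mathlib

section
/- Fix constants δ₀, ρ₀ ∈ (0,1) and set α₀ = (1−ρ₀)(1−δ₀)²/ρ₀ and β₀ = (1−ρ₀)(1−δ₀)/ρ₀. Then there exists a constant C > 0 depending only on (δ₀, ρ₀) such that for every n ≥ 2 and every centered Gaussian vector X = (X_1,…,X_n) with var(X_i) = 1 for all i and correlation matrix R satisfying |R_{ij}| ≤ ρ₀ for all i ≠ j, one has P(max_{1≤i≤n} |X_i| ≤ δ₀ √(2(1−ρ₀)log(2n))) ≤ C · (2n)^{−α₀} · (log(2n))^{(β₀−1)/2}. -/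
open MeasureTheory ProbabilityTheory Real

/-- `X` is a centered Gaussian random vector with standardized entries and
correlation (= covariance) matrix `R`: every linear combination of the
coordinates is a centered real Gaussian with the corresponding variance,
and `R` has unit diagonal. -/
def IsCenteredGaussianVec {Ω : Type*} [MeasureSpace Ω] {n : ℕ}
    (X : Fin n → Ω → ℝ) (R : Matrix (Fin n) (Fin n) ℝ) : Prop :=
  (∀ i, Measurable (X i)) ∧ (∀ i, R i i = 1) ∧
    ∀ a : Fin n → ℝ,
      Measure.map (fun ω => ∑ i, a i * X i ω) (ℙ : Measure Ω) =
        gaussianReal 0 (Real.toNNReal (∑ i, ∑ j, a i * R i j * a j))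

/-!
Passing to the `2n` variables `±Xᵢ` makes the event one-sided. Slepian's inequality then bounds its
probability by that of the equicorrelated vector `√(1 - ρ) ξᵢ - √ρ ζ`, for which conditioning on `ζ`
gives `E Φ(δ √(2 log N) + c ζ) ^ N` with `N = 2n`, `c = √(ρ / (1 - ρ))` and `Φ` the normal
distribution function. The power `Φ(u) ^ N` is negligible until `u` reaches the level `w` with
`w² = 2 log N - log log N`, so the expectation is of the order of the Gaussian tail
`x⁻¹ exp (-x² / 2)` at the point `x = (w - δ √(2 log N)) / c`.

Slepian's inequality itself is proved by rotating one centered Gaussian vector into another: the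
derivative of `E F(cos θ · X + sin θ · Y)` is a sum of terms `E[U G(V)]` with `U`, `V` jointly
Gaussian, whose sign is that of `Cov(U, V)` when `G` is monotone in the relevant coordinate.
-/

section Regression

variable {Ω ι : Type*} [MeasurableSpace Ω] {P : Measure Ω}

theorem covariance_add_prod {Ω' : Type*} [MeasurableSpace Ω'] {Q : Measure Ω'}
    [IsProbabilityMeasure P] [IsProbabilityMeasure Q] {X X' : Ω → ℝ} {Y Y' : Ω' → ℝ}
    (hX : MemLp X 2 P) (hX' : MemLp X' 2 P) (hY : MemLp Y 2 Q) (hY' : MemLp Y' 2 Q) :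
    cov[fun p ↦ X p.1 + Y p.2, fun p ↦ X' p.1 + Y' p.2; P.prod Q]
      = cov[X, X'; P] + cov[Y, Y'; Q] := by
  have fst_fst : cov[fun p ↦ X p.1, fun p ↦ X' p.1; P.prod Q] = cov[X, X'; P] :=
    measurePreserving_fst.hasLaw.covariance_fun_comp hX.aemeasurable hX'.aemeasurable
  have snd_snd : cov[fun p ↦ Y p.2, fun p ↦ Y' p.2; P.prod Q] = cov[Y, Y'; Q] :=
    measurePreserving_snd.hasLaw.covariance_fun_comp hY.aemeasurable hY'.aemeasurable
  have fst_snd : cov[fun p ↦ X p.1, fun p ↦ Y' p.2; P.prod Q] = 0 :=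
    covariance_fst_snd_prod hX hY'
  have snd_fst : cov[fun p ↦ Y p.2, fun p ↦ X' p.1; P.prod Q] = 0 := by
    rw [covariance_comm]; exact covariance_fst_snd_prod hX' hY
  have hX₁ := hX.comp_fst Q
  have hX'₁ := hX'.comp_fst Q
  have hY₂ := hY.comp_snd P
  have hY'₂ := hY'.comp_snd P
  refine (covariance_add_left hX₁ hY₂ (hX'₁.add hY'₂)).trans ?_
  rw [covariance_add_right hX₁ hX'₁ hY'₂, covariance_add_right hY₂ hX'₁ hY'₂]
  linarith

theorem covariance_eq_zero_of_variance_eq_zero [IsFiniteMeasure P] {U W : Ω → ℝ}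
    (hU : MemLp U 2 P) (hVar : Var[U; P] = 0) : cov[U, W; P] = 0 := by
  refine integral_eq_zero_of_ae ?_
  filter_upwards [ae_eq_integral_of_variance_eq_zero hU hVar] with ω hω
  simp [hω]

theorem covariance_sub_regression [IsFiniteMeasure P] {U W : Ω → ℝ}
    (hU : MemLp U 2 P) (hW : MemLp W 2 P) :
    cov[U, fun ω ↦ W ω - U ω / Var[U; P] * cov[U, W; P]; P] = 0 := by
  have hUdiv : MemLp (fun ω ↦ U ω / Var[U; P] * cov[U, W; P]) 2 P := by
    simpa only [div_eq_mul_inv, mul_assoc] using hU.mul_const ((Var[U; P])⁻¹ * cov[U, W; P])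
  rw [covariance_fun_sub_right hU hW hUdiv, covariance_mul_const_right, covariance_fun_div_right,
    covariance_self hU.aemeasurable]
  by_cases hVar : Var[U; P] = 0
  · simp [covariance_eq_zero_of_variance_eq_zero hU hVar]
  · rw [div_self hVar, one_mul, sub_self]

section GaussianPair

variable [Finite ι] {U : Ω → ℝ} {Z : Ω → ι → ℝ}

theorem indepFun_sub_regression (hUZ : HasGaussianLaw (fun ω ↦ (U ω, Z ω)) P) :
    IndepFun U (fun ω j ↦ Z ω j - U ω / Var[U; P] * cov[U, fun ω ↦ Z ω j; P]) P := by
  cases nonempty_fintype ι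
  have := hUZ.isProbabilityMeasure
  let T : (ℝ × (ι → ℝ)) →L[ℝ] (Unit → ℝ) × (ι → ℝ) :=
    .prod (.pi fun _ ↦ .fst ℝ ℝ (ι → ℝ))
      (.pi fun j ↦ .proj j ∘L .snd ℝ ℝ (ι → ℝ)
        - (cov[U, fun ω ↦ Z ω j; P] / Var[U; P]) • .fst ℝ ℝ (ι → ℝ))
  have hjoint : HasGaussianLaw (fun ω ↦ ((fun _ : Unit ↦ U ω),
      fun j ↦ Z ω j - U ω / Var[U; P] * cov[U, fun ω ↦ Z ω j; P])) P := by
    convert! hUZ.map_fun T using 4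
    simp [T]
    ring
  have hindep := hjoint.indepFun_of_covariance_eval (X := fun _ ↦ U) fun _ j ↦
    covariance_sub_regression hUZ.fst.memLp_two (hUZ.snd.eval j).memLp_two
  exact hindep.comp (φ := fun u : Unit → ℝ ↦ u ()) (measurable_pi_apply ()) measurable_id

/- Gaussian regression writes `Z = W + (U / Var U) • Cov(U, Z)` with `W` independent of `U`, so that
`U * f W` has mean zero, while `U * (f Z - f W) ≥ 0` by monotonicity. -/
theorem integral_mul_comp_nonneg_of_monotone (hUZ : HasGaussianLaw (fun ω ↦ (U ω, Z ω)) P)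
    (hU : P[U] = 0) {f : (ι → ℝ) → ℝ} (hf : Measurable f) {K : ℝ} (hfK : ∀ z, |f z| ≤ K)
    (hmono : ∀ z, Monotone fun s : ℝ ↦ f (z + s • fun j ↦ cov[U, fun ω ↦ Z ω j; P])) :
    0 ≤ ∫ ω, U ω * f (Z ω) ∂P := by
  cases nonempty_fintype ι
  have := hUZ.isProbabilityMeasure
  set W : Ω → ι → ℝ := fun ω j ↦ Z ω j - U ω / Var[U; P] * cov[U, fun ω ↦ Z ω j; P]
  have hZ_meas : AEMeasurable Z P := hUZ.snd.aemeasurable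
  have hU_meas : AEMeasurable U P := hUZ.fst.aemeasurable
  have hW_meas : AEMeasurable W P := by
    refine aemeasurable_pi_lambda _ fun j ↦ ?_
    exact (aemeasurable_pi_iff.1 hZ_meas j).sub ((hU_meas.div_const _).mul_const _)
  have hUf_int {V : Ω → ι → ℝ} (hV : AEMeasurable V P) : Integrable (fun ω ↦ U ω * f (V ω)) P :=
    hUZ.fst.integrable.mul_bdd (c := K) (hf.comp_aemeasurable hV).aestronglyMeasurable
      (ae_of_all _ fun _ ↦ hfK _)
  have hW_zero : ∫ ω, U ω * f (W ω) ∂P = 0 := by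
    have hindep : IndepFun U (fun ω ↦ f (W ω)) P :=
      (indepFun_sub_regression hUZ).comp measurable_id hf
    rw [hindep.integral_fun_mul_eq_mul_integral hU_meas.aestronglyMeasurable
      (hf.comp_aemeasurable hW_meas).aestronglyMeasurable, hU, zero_mul]
  have hpointwise : ∀ ω, 0 ≤ U ω * f (Z ω) - U ω * f (W ω) := fun ω ↦ by
    have hline := hmono (W ω)
    have hW_at : f (W ω) = f (W ω + (0 : ℝ) • fun j ↦ cov[U, fun ω ↦ Z ω j; P]) := by simp
    have hZ_at : f (Z ω) = f (W ω + (U ω / Var[U; P]) • fun j ↦ cov[U, fun ω ↦ Z ω j; P]) := by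
      congr 1; ext j; simp [W]
    rw [← mul_sub, hW_at, hZ_at]
    rcases le_total 0 (U ω) with hω | hω
    · exact mul_nonneg hω (sub_nonneg.2 (hline (div_nonneg hω (variance_nonneg _ _))))
    · exact mul_nonneg_of_nonpos_of_nonpos hω
        (sub_nonpos.2 (hline (div_nonpos_of_nonpos_of_nonneg hω (variance_nonneg _ _))))
  calc 0 ≤ ∫ ω, (U ω * f (Z ω) - U ω * f (W ω)) ∂P := integral_nonneg hpointwise
    _ = ∫ ω, U ω * f (Z ω) ∂P := by
      rw [integral_sub (hUf_int hZ_meas) (hUf_int hW_meas), hW_zero, sub_zero]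

end GaussianPair

end Regression

section Comparison

variable {ι : Type*}

local notation "Rot" => ContinuousLinearMap.rotation

/-- The covariance matrix `(Cov(xᵢ, xⱼ))ᵢⱼ` of the coordinates under a measure `μ` on `ι → ℝ`. -/
noncomputable def covMatrix (μ : Measure (ι → ℝ)) : Matrix ι ι ℝ :=
  .of fun i j ↦ cov[fun x ↦ x i, fun x ↦ x j; μ]

theorem covMatrix_map {Ω : Type*} [MeasurableSpace Ω] {P : Measure Ω} {f : Ω → ι → ℝ}
    (hf : AEMeasurable f P) (i j : ι) :
    covMatrix (P.map f) i j = cov[fun ω ↦ f ω i, fun ω ↦ f ω j; P] :=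
  covariance_map_fun (measurable_pi_apply i).aestronglyMeasurable
    (measurable_pi_apply j).aestronglyMeasurable hf

variable {μ ν : Measure (ι → ℝ)} [IsGaussian μ] [IsGaussian ν]

theorem integrable_eval_of_isGaussian (i : ι) : Integrable (fun x : ι → ℝ ↦ x i) μ :=
  (IsGaussian.hasGaussianLaw_id.eval i).integrable

theorem memLp_two_eval_of_isGaussian (i : ι) : MemLp (fun x : ι → ℝ ↦ x i) 2 μ :=
  (IsGaussian.hasGaussianLaw_id.eval i).memLp_two

variable [Fintype ι]

theorem covariance_rotation (θ : ℝ) (i j : ι) :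
    cov[fun p : (ι → ℝ) × (ι → ℝ) ↦ (Rot θ p).2 i,
        fun p : (ι → ℝ) × (ι → ℝ) ↦ (Rot θ p).1 j; μ.prod ν]
      = sin θ * cos θ * (covMatrix ν - covMatrix μ) i j := by
  have hμ := memLp_two_eval_of_isGaussian (μ := μ)
  have hν := memLp_two_eval_of_isGaussian (μ := ν)
  refine (covariance_add_prod ((hμ i).const_mul (-sin θ)) ((hμ j).const_mul (cos θ))
    ((hν i).const_mul (cos θ)) ((hν j).const_mul (sin θ))).trans ?_
  simp only [covariance_const_mul_left, covariance_const_mul_right, covMatrix, Matrix.sub_apply,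
    Matrix.of_apply]
  ring

theorem integral_rotation_snd_eq_zero (hμ : ∀ i, ∫ x, x i ∂μ = 0) (hν : ∀ i, ∫ x, x i ∂ν = 0)
    (θ : ℝ) (i : ι) : ∫ p, (Rot θ p).2 i ∂(μ.prod ν) = 0 := by
  have hfst : ∫ p, p.1 i ∂(μ.prod ν) = 0 := by
    rw [integral_fun_fst fun x : ι → ℝ ↦ x i, hμ, smul_zero]
  have hsnd : ∫ p, p.2 i ∂(μ.prod ν) = 0 := by
    rw [integral_fun_snd fun x : ι → ℝ ↦ x i, hν, smul_zero]
  simp only [ContinuousLinearMap.rotation_apply, Pi.add_apply, Pi.smul_apply, smul_eq_mul]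
  rw [integral_add ((integrable_eval_of_isGaussian i).comp_fst ν |>.const_mul _)
    ((integrable_eval_of_isGaussian i).comp_snd μ |>.const_mul _), integral_const_mul,
    integral_const_mul, hfst, hsnd, mul_zero, mul_zero, add_zero]

theorem hasDerivAt_rotation_fst {E : Type*} [NormedAddCommGroup E] [NormedSpace ℝ E] (p : E × E)
    (θ : ℝ) :
    HasDerivAt (fun θ ↦ (Rot θ p).1) (Rot θ p).2 θ :=
  ((hasDerivAt_cos θ).smul_const p.1).add ((hasDerivAt_sin θ).smul_const p.2)

theorem norm_rotation_snd_le {E : Type*} [NormedAddCommGroup E] [NormedSpace ℝ E] (p : E × E)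
    (θ : ℝ) : ‖(Rot θ p).2‖ ≤ ‖p.1‖ + ‖p.2‖ := by
  refine (norm_add_le _ _).trans (add_le_add ?_ ?_)
  · rw [norm_smul, norm_neg]
    exact mul_le_of_le_one_left (norm_nonneg _) (abs_sin_le_one θ)
  · rw [norm_smul]
    exact mul_le_of_le_one_left (norm_nonneg _) (abs_cos_le_one θ)

theorem integrable_comp_of_norm_fderiv_le {Ω E : Type*} [MeasurableSpace Ω] {P : Measure Ω}
    [IsFiniteMeasure P] [NormedAddCommGroup E] [NormedSpace ℝ E] {F : E → ℝ} {X : Ω → E} {K : ℝ}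
    (hX : Integrable X P) (hF : Differentiable ℝ F) (hK : ∀ z, ‖fderiv ℝ F z‖ ≤ K) :
    Integrable (fun ω ↦ F (X ω)) P := by
  refine ((integrable_const ‖F 0‖).add (hX.norm.const_mul K)).mono'
    (hF.continuous.comp_aestronglyMeasurable hX.aestronglyMeasurable) (ae_of_all _ fun ω ↦ ?_)
  have hgrowth := convex_univ.norm_image_sub_le_of_norm_fderiv_le (fun z _ ↦ hF z)
    (fun z _ ↦ hK z) (Set.mem_univ 0) (Set.mem_univ (X ω))
  rw [sub_zero] at hgrowth
  exact (norm_le_norm_add_norm_sub' _ _).trans (add_le_add_right hgrowth _)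

variable (μ ν) in
theorem hasGaussianLaw_rotation (θ : ℝ) :
    HasGaussianLaw (fun p : (ι → ℝ) × (ι → ℝ) ↦ Rot θ p) (μ.prod ν) :=
  (IsGaussian.hasGaussianLaw_id (μ := μ.prod ν)).map_fun (Rot θ)

theorem hasDerivAt_integral_comp_rotation_fst {F : (ι → ℝ) → ℝ} (hF : ContDiff ℝ 1 F) {K : ℝ}
    (hK : ∀ z, ‖fderiv ℝ F z‖ ≤ K) (θ : ℝ) :
    HasDerivAt (fun θ ↦ ∫ p, F (Rot θ p).1 ∂(μ.prod ν))
      (∫ p, fderiv ℝ F (Rot θ p).1 (Rot θ p).2 ∂(μ.prod ν)) θ := by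
  have hF_int (θ : ℝ) : Integrable (fun p ↦ F (Rot θ p).1) (μ.prod ν) :=
    integrable_comp_of_norm_fderiv_le (hasGaussianLaw_rotation μ ν θ).fst.integrable
      (hF.differentiable one_ne_zero) hK
  have hK_nonneg : 0 ≤ K := (norm_nonneg _).trans (hK 0)
  have hF' : Continuous fun q : (ι → ℝ) × (ι → ℝ) ↦ fderiv ℝ F q.1 q.2 :=
    (hF.continuous_fderiv one_ne_zero |>.comp continuous_fst).clm_apply continuous_snd
  refine (hasDerivAt_integral_of_dominated_loc_of_deriv_le Filter.univ_mem
    (F' := fun θ p ↦ fderiv ℝ F (Rot θ p).1 (Rot θ p).2) (bound := fun p ↦ K * (‖p.1‖ + ‖p.2‖))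
    (.of_forall fun θ ↦ (hF_int θ).aestronglyMeasurable)
    (hF_int θ) ?_ ?_ ?_ ?_).2
  · exact (hF'.comp (Rot θ).continuous).aestronglyMeasurable
  · refine ae_of_all _ fun p θ _ ↦ ?_
    exact (ContinuousLinearMap.le_of_opNorm_le _ (hK _) _).trans
      (mul_le_mul_of_nonneg_left (norm_rotation_snd_le p θ) hK_nonneg)
  · exact (IsGaussian.integrable_id.norm.comp_fst ν |>.add
      (IsGaussian.integrable_id.norm.comp_snd μ)).const_mul K
  · exact ae_of_all _ fun p θ _ ↦ (hF.differentiable one_ne_zero _).hasFDerivAt.comp_hasDerivAt θ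
      (hasDerivAt_rotation_fst p θ)

theorem clm_apply_eq_sum_mul_single [DecidableEq ι] (L : (ι → ℝ) →L[ℝ] ℝ) (u : ι → ℝ) :
    L u = ∑ i, u i * L (Pi.single i 1) := by
  conv_lhs => rw [pi_eq_sum_univ' u, map_sum]
  simp

theorem integral_rotation_mul_comp_nonneg (hμ : ∀ i, ∫ x, x i ∂μ = 0)
    (hν : ∀ i, ∫ x, x i ∂ν = 0) {θ : ℝ} (hθ : 0 ≤ sin θ * cos θ) {i : ι} {f : (ι → ℝ) → ℝ}
    (hf : Measurable f) {K : ℝ} (hfK : ∀ z, |f z| ≤ K)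
    (hmono : ∀ z, Monotone fun s : ℝ ↦ f (z + s • (covMatrix ν - covMatrix μ) i)) :
    0 ≤ ∫ p, (Rot θ p).2 i * f (Rot θ p).1 ∂(μ.prod ν) := by
  have hlaw : HasGaussianLaw (fun p : (ι → ℝ) × (ι → ℝ) ↦ ((Rot θ p).2 i, (Rot θ p).1))
      (μ.prod ν) :=
    (hasGaussianLaw_rotation μ ν θ).map_fun (.prod (.proj i ∘L .snd ℝ _ _) (.fst ℝ _ _))
  refine integral_mul_comp_nonneg_of_monotone hlaw
    (integral_rotation_snd_eq_zero hμ hν θ i) hf hfK fun z s t hst ↦ ?_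
  have hrow : (fun j ↦ cov[fun p : (ι → ℝ) × (ι → ℝ) ↦ (Rot θ p).2 i,
      fun p : (ι → ℝ) × (ι → ℝ) ↦ (Rot θ p).1 j; μ.prod ν])
      = (sin θ * cos θ) • (covMatrix ν - covMatrix μ) i :=
    funext fun j ↦ covariance_rotation θ i j
  simpa only [hrow, smul_smul] using hmono z (mul_le_mul_of_nonneg_right hst hθ)

theorem integral_fderiv_rotation_nonneg [DecidableEq ι] (hμ : ∀ i, ∫ x, x i ∂μ = 0)
    (hν : ∀ i, ∫ x, x i ∂ν = 0) {θ : ℝ} (hθ : 0 ≤ sin θ * cos θ) {F : (ι → ℝ) → ℝ}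
    (hF : ContDiff ℝ 1 F) {K : ℝ} (hK : ∀ z, ‖fderiv ℝ F z‖ ≤ K)
    (hmono : ∀ i z, Monotone fun s : ℝ ↦
      fderiv ℝ F (z + s • (covMatrix ν - covMatrix μ) i) (Pi.single i 1)) :
    0 ≤ ∫ p, fderiv ℝ F (Rot θ p).1 (Rot θ p).2 ∂(μ.prod ν) := by
  have hpartial (i : ι) : Continuous fun z ↦ fderiv ℝ F z (Pi.single i 1) :=
    (hF.continuous_fderiv one_ne_zero).clm_apply continuous_const
  have hpartial_le (i : ι) (z : ι → ℝ) : |fderiv ℝ F z (Pi.single i 1)| ≤ K :=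
    ((fderiv ℝ F z).unit_le_opNorm _ (by simp [Pi.norm_single])).trans (hK z)
  let term (i : ι) (p : (ι → ℝ) × (ι → ℝ)) : ℝ :=
    (Rot θ p).2 i * fderiv ℝ F (Rot θ p).1 (Pi.single i 1)
  have hterm_int (i : ι) : Integrable (term i) (μ.prod ν) :=
    ((hasGaussianLaw_rotation μ ν θ).snd.eval i).integrable.mul_bdd (c := K)
      ((hpartial i).comp (continuous_fst.comp (Rot θ).continuous)).aestronglyMeasurable
      (ae_of_all _ fun _ ↦ hpartial_le i _)
  calc 0 ≤ ∑ i, ∫ p, term i p ∂(μ.prod ν) :=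
        Finset.sum_nonneg fun i _ ↦ integral_rotation_mul_comp_nonneg hμ hν hθ
          (hpartial i).measurable (hpartial_le i) (hmono i)
    _ = ∫ p, ∑ i, term i p ∂(μ.prod ν) :=
        (integral_finsetSum _ fun i _ ↦ hterm_int i).symm
    _ = ∫ p, fderiv ℝ F (Rot θ p).1 (Rot θ p).2 ∂(μ.prod ν) :=
        integral_congr_ae (ae_of_all _ fun p ↦ (clm_apply_eq_sum_mul_single _ _).symm)

theorem integral_le_integral_of_monotone_fderiv [DecidableEq ι] (hμ : ∀ i, ∫ x, x i ∂μ = 0)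
    (hν : ∀ i, ∫ x, x i ∂ν = 0) {F : (ι → ℝ) → ℝ} (hF : ContDiff ℝ 1 F) {K : ℝ}
    (hK : ∀ z, ‖fderiv ℝ F z‖ ≤ K)
    (hmono : ∀ i z, Monotone fun s : ℝ ↦
      fderiv ℝ F (z + s • (covMatrix ν - covMatrix μ) i) (Pi.single i 1)) :
    ∫ x, F x ∂μ ≤ ∫ x, F x ∂ν := by
  let I : ℝ → ℝ := fun θ ↦ ∫ p, F (Rot θ p).1 ∂(μ.prod ν)
  have hI (θ : ℝ) := hasDerivAt_integral_comp_rotation_fst (μ := μ) (ν := ν) hF hK θ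
  have hI_mono : MonotoneOn I (Set.Icc 0 (π / 2)) := by
    refine monotoneOn_of_deriv_nonneg (convex_Icc _ _)
      (fun θ _ ↦ (hI θ).continuousAt.continuousWithinAt)
      (fun θ _ ↦ (hI θ).differentiableAt.differentiableWithinAt) fun θ hθ ↦ ?_
    obtain ⟨hθ₀, hθ₁⟩ := interior_subset hθ
    rw [(hI θ).deriv]
    refine integral_fderiv_rotation_nonneg hμ hν (mul_nonneg ?_ ?_) hF hK hmono
    · exact sin_nonneg_of_nonneg_of_le_pi hθ₀ (by linarith [pi_pos])
    · exact cos_nonneg_of_mem_Icc ⟨by linarith [pi_pos], hθ₁⟩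
  have hπ : (0 : ℝ) ≤ π / 2 := by positivity
  simpa [I, ContinuousLinearMap.rotation_apply, integral_fun_fst, integral_fun_snd]
    using hI_mono ⟨le_rfl, hπ⟩ ⟨hπ, le_rfl⟩ hπ

end Comparison

section Slepian

variable {ι : Type*} [Fintype ι] {μ ν : Measure (ι → ℝ)} [IsGaussian μ] [IsGaussian ν]

theorem hasFDerivAt_prod_comp_eval [DecidableEq ι] {g : ι → ℝ → ℝ}
    (hg : ∀ i, Differentiable ℝ (g i)) (z : ι → ℝ) :
    HasFDerivAt (fun z : ι → ℝ ↦ ∏ i, g i (z i))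
      (∑ i, (∏ j ∈ Finset.univ.erase i, g j (z j)) •
        deriv (g i) (z i) • (ContinuousLinearMap.proj i : (ι → ℝ) →L[ℝ] ℝ)) z :=
  HasFDerivAt.finsetProd fun i _ ↦
    (hg i (z i)).hasDerivAt.comp_hasFDerivAt z (hasFDerivAt_apply i z)

theorem norm_fderiv_prod_comp_eval_le {g : ι → ℝ → ℝ} (hg : ∀ i, Differentiable ℝ (g i))
    (hg01 : ∀ i x, g i x ∈ Set.Icc 0 1) {K : ℝ} (hK : ∀ i x, |deriv (g i) x| ≤ K) (z : ι → ℝ) :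
    ‖fderiv ℝ (fun z : ι → ℝ ↦ ∏ i, g i (z i)) z‖ ≤ Fintype.card ι * K := by
  classical
  rw [(hasFDerivAt_prod_comp_eval hg z).fderiv, ← nsmul_eq_mul]
  refine (norm_sum_le _ _).trans (Finset.sum_le_card_nsmul _ _ _ fun i _ ↦ ?_)
  have hprod : ‖∏ j ∈ Finset.univ.erase i, g j (z j)‖ ≤ 1 := by
    rw [norm_prod]
    refine Finset.prod_le_one (fun _ _ ↦ norm_nonneg _) fun j _ ↦ ?_
    rw [norm_of_nonneg (hg01 j _).1]
    exact (hg01 j _).2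
  have hproj : ‖(ContinuousLinearMap.proj i : (ι → ℝ) →L[ℝ] ℝ)‖ ≤ 1 :=
    ContinuousLinearMap.opNorm_le_bound _ zero_le_one fun x ↦ by simpa using norm_le_pi_norm x i
  rw [norm_smul, norm_smul]
  have hK_nonneg : 0 ≤ K := (abs_nonneg _).trans (hK i (z i))
  calc _ ≤ 1 * (K * 1) := by gcongr; exact hK i (z i)
    _ = K := by ring

theorem integral_prod_le_integral_prod_of_covMatrix_le {g : ι → ℝ → ℝ}
    (hμ : ∀ i, ∫ x, x i ∂μ = 0) (hν : ∀ i, ∫ x, x i ∂ν = 0)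
    (hdiag : ∀ i, covMatrix μ i i = covMatrix ν i i)
    (hcov : ∀ i j, covMatrix μ i j ≤ covMatrix ν i j)
    (hg : ∀ i, ContDiff ℝ 1 (g i)) (hg_anti : ∀ i, Antitone (g i))
    (hg01 : ∀ i x, g i x ∈ Set.Icc 0 1) {K : ℝ} (hK : ∀ i x, |deriv (g i) x| ≤ K) :
    ∫ x, ∏ i, g i (x i) ∂μ ≤ ∫ x, ∏ i, g i (x i) ∂ν := by
  classical
  have hg_diff (i : ι) : Differentiable ℝ (g i) := (hg i).differentiable one_ne_zero
  have hF : ContDiff ℝ 1 fun z : ι → ℝ ↦ ∏ i, g i (z i) :=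
    contDiff_prod fun i _ ↦ (hg i).comp (contDiff_apply ℝ ℝ i)
  refine integral_le_integral_of_monotone_fderiv hμ hν hF
    (norm_fderiv_prod_comp_eval_le hg_diff hg01 hK) fun i z s t hst ↦ ?_
  have hpartial (w : ι → ℝ) : fderiv ℝ (fun z : ι → ℝ ↦ ∏ i, g i (z i)) w (Pi.single i 1)
      = (∏ j ∈ Finset.univ.erase i, g j (w j)) * deriv (g i) (w i) := by
    rw [(hasFDerivAt_prod_comp_eval hg_diff w).fderiv, sum_apply,
      Finset.sum_eq_single i] <;> simp +contextual
  simp only [hpartial, Pi.add_apply, Pi.smul_apply, Matrix.sub_apply, hdiag i, sub_self, smul_zero,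
    add_zero]
  refine mul_le_mul_of_nonpos_right (Finset.prod_le_prod (fun j _ ↦ (hg01 j _).1) fun j _ ↦ ?_)
    (hg_anti i).deriv_nonpos
  exact hg_anti j (by gcongr; exact sub_nonneg.2 (hcov i j))

theorem exists_abs_deriv_smoothTransition_le : ∃ K, ∀ x, |deriv smoothTransition x| ≤ K := by
  have hcont : Continuous (deriv smoothTransition) :=
    (smoothTransition.contDiff (n := 1)).continuous_deriv le_rfl
  have hsupp : HasCompactSupport (deriv smoothTransition) := by
    refine HasCompactSupport.intro (K := Set.Icc 0 1) isCompact_Icc fun x hx ↦ ?_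
    rcases not_and_or.1 hx with hx | hx <;> rw [not_le] at hx
    · have : smoothTransition =ᶠ[nhds x] fun _ ↦ 0 := by
        filter_upwards [gt_mem_nhds hx] with y hy using smoothTransition.zero_of_nonpos hy.le
      rw [this.deriv_eq, deriv_const]
    · have : smoothTransition =ᶠ[nhds x] fun _ ↦ 1 := by
        filter_upwards [lt_mem_nhds hx] with y hy using smoothTransition.one_of_one_le hy.le
      rw [this.deriv_eq, deriv_const]
  exact hcont.bounded_above_of_compact_support hsupp

/-- A smooth cutoff equal to `1` on `(-∞, t]` and to `0` on `[t + a⁻¹, ∞)`, for `a > 0`. -/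
noncomputable def smoothCutoff (a t x : ℝ) : ℝ := smoothTransition (1 - a * (x - t))

theorem contDiff_smoothCutoff (a t : ℝ) : ContDiff ℝ 1 (smoothCutoff a t) :=
  smoothTransition.contDiff.comp (by fun_prop)

theorem antitone_smoothCutoff {a : ℝ} (ha : 0 ≤ a) (t : ℝ) : Antitone (smoothCutoff a t) :=
  fun x y hxy ↦ smoothTransition.monotone (by gcongr)

theorem smoothCutoff_mem_Icc (a t x : ℝ) : smoothCutoff a t x ∈ Set.Icc 0 1 :=
  ⟨smoothTransition.nonneg _, smoothTransition.le_one _⟩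

theorem exists_abs_deriv_smoothCutoff_le (a : ℝ) :
    ∃ K, ∀ t x, |deriv (smoothCutoff a t) x| ≤ K := by
  obtain ⟨K, hK⟩ := exists_abs_deriv_smoothTransition_le
  refine ⟨K * |a|, fun t x ↦ ?_⟩
  have hline : HasDerivAt (fun x ↦ 1 - a * (x - t)) (-a) x := by
    simpa using (((hasDerivAt_id x).sub_const t).const_mul a).const_sub 1
  have hderiv : deriv (smoothCutoff a t) x = deriv smoothTransition (1 - a * (x - t)) * -a :=
    ((smoothTransition.contDiff.differentiable one_ne_zero _).hasDerivAt.comp x hline).deriv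
  rw [hderiv, abs_mul, abs_neg]
  exact mul_le_mul_of_nonneg_right (hK _) (abs_nonneg a)

theorem tendsto_smoothCutoff (t x : ℝ) :
    Filter.Tendsto (fun a ↦ smoothCutoff a t x) Filter.atTop
      (nhds ((Set.Iic t).indicator 1 x)) := by
  refine tendsto_const_nhds.congr' ?_
  by_cases hx : x ≤ t
  · filter_upwards [Filter.eventually_ge_atTop 0] with a ha
    rw [Set.indicator_of_mem (Set.mem_Iic.2 hx), Pi.one_apply]
    exact (smoothTransition.one_of_one_le
      (by linarith [mul_nonpos_of_nonneg_of_nonpos ha (sub_nonpos.2 hx)])).symm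
  · filter_upwards [Filter.eventually_ge_atTop (x - t)⁻¹] with a ha
    rw [Set.indicator_of_notMem (Set.notMem_Iic.2 (not_le.1 hx))]
    refine (smoothTransition.zero_of_nonpos (sub_nonpos.2 ?_)).symm
    rwa [← inv_le_iff_one_le_mul₀ (sub_pos.2 (not_le.1 hx))]

theorem tendsto_integral_prod_smoothCutoff (η : Measure (ι → ℝ)) [IsFiniteMeasure η] (t : ι → ℝ) :
    Filter.Tendsto (fun a ↦ ∫ x, ∏ i, smoothCutoff a (t i) (x i) ∂η) Filter.atTop
      (nhds (η.real (Set.Iic t))) := by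
  have hind (x : ι → ℝ) :
      ∏ i, (Set.Iic (t i)).indicator 1 (x i) = (Set.Iic t).indicator (1 : (ι → ℝ) → ℝ) x := by
    by_cases hx : x ≤ t
    · rw [Set.indicator_of_mem (Set.mem_Iic.2 hx)]
      exact Finset.prod_eq_one fun i _ ↦ Set.indicator_of_mem (Set.mem_Iic.2 (hx i)) _
    · obtain ⟨i, hi⟩ := not_forall.1 hx
      rw [Set.indicator_of_notMem hx]
      exact Finset.prod_eq_zero (Finset.mem_univ i)
        (Set.indicator_of_notMem (Set.notMem_Iic.2 (not_le.1 hi)) _)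
  rw [← integral_indicator_one measurableSet_Iic]
  refine tendsto_integral_filter_of_dominated_convergence (fun _ ↦ 1) ?_ ?_ (integrable_const 1) ?_
  · refine .of_forall fun a ↦ Continuous.aestronglyMeasurable ?_
    exact continuous_finsetProd _ fun i _ ↦
      (contDiff_smoothCutoff a (t i)).continuous.comp (continuous_apply i)
  · refine .of_forall fun a ↦ ae_of_all _ fun x ↦ ?_
    rw [norm_of_nonneg (Finset.prod_nonneg fun i _ ↦ (smoothCutoff_mem_Icc a _ _).1)]
    exact Finset.prod_le_one (fun i _ ↦ (smoothCutoff_mem_Icc a _ _).1)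
      fun i _ ↦ (smoothCutoff_mem_Icc a _ _).2
  · refine ae_of_all _ fun x ↦ ?_
    rw [← hind]
    exact tendsto_finsetProd _ fun i _ ↦ tendsto_smoothCutoff (t i) (x i)

theorem slepian_inequality {ι : Type*} [Finite ι] {μ ν : Measure (ι → ℝ)} [IsGaussian μ]
    [IsGaussian ν] (hμ : ∀ i, ∫ x, x i ∂μ = 0) (hν : ∀ i, ∫ x, x i ∂ν = 0)
    (hdiag : ∀ i, covMatrix μ i i = covMatrix ν i i)
    (hcov : ∀ i j, covMatrix μ i j ≤ covMatrix ν i j) (t : ι → ℝ) :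
    μ.real (Set.Iic t) ≤ ν.real (Set.Iic t) := by
  cases nonempty_fintype ι
  refine le_of_tendsto_of_tendsto (tendsto_integral_prod_smoothCutoff μ t)
    (tendsto_integral_prod_smoothCutoff ν t) ?_
  filter_upwards [Filter.eventually_ge_atTop 0] with a ha
  obtain ⟨K, hK⟩ := exists_abs_deriv_smoothCutoff_le a
  exact integral_prod_le_integral_prod_of_covMatrix_le hμ hν hdiag hcov
    (fun i ↦ contDiff_smoothCutoff a (t i)) (fun i ↦ antitone_smoothCutoff ha (t i))
    (fun i ↦ smoothCutoff_mem_Icc a (t i)) fun i ↦ hK (t i)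

end Slepian

section Equicorrelated

variable {ι : Type*} [Fintype ι]

theorem isGaussian_pi {μ : ι → Measure ℝ} [∀ i, IsGaussian (μ i)] : IsGaussian (Measure.pi μ) := by
  have hindep : iIndepFun (fun i (x : ι → ℝ) ↦ x i) (Measure.pi μ) :=
    iIndepFun_pi fun _ ↦ aemeasurable_id
  have hlaw (i : ι) : HasGaussianLaw (fun x : ι → ℝ ↦ x i) (Measure.pi μ) :=
    (measurePreserving_eval μ i).hasLaw.hasGaussianLaw
  simpa using (hindep.hasGaussianLaw hlaw).isGaussian_map

theorem covMatrix_pi_gaussianReal [DecidableEq ι] :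
    covMatrix (Measure.pi fun _ : ι ↦ gaussianReal 0 1) = 1 := by
  have hlaw (i : ι) : HasLaw (fun x : ι → ℝ ↦ x i) (gaussianReal 0 1)
      (Measure.pi fun _ ↦ gaussianReal 0 1) :=
    (measurePreserving_eval (fun _ ↦ gaussianReal 0 1) i).hasLaw
  have hindep : iIndepFun (fun i (x : ι → ℝ) ↦ x i) (Measure.pi fun _ ↦ gaussianReal 0 1) :=
    iIndepFun_pi fun _ ↦ aemeasurable_id
  ext i j
  rw [covMatrix, Matrix.of_apply]
  rcases eq_or_ne i j with rfl | hij
  · rw [covariance_self (measurable_pi_apply i).aemeasurable, (hlaw i).variance_eq,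
      variance_id_gaussianReal, Matrix.one_apply_eq, NNReal.coe_one]
  · rw [Matrix.one_apply_ne hij]
    exact (hindep.indepFun hij).covariance_eq_zero (hlaw i).hasGaussianLaw.memLp_two
      (hlaw j).hasGaussianLaw.memLp_two

/-- The centered Gaussian vector with unit variances and all correlations equal to `ρ ∈ [0, 1]`,
realised as `√(1 - ρ) ξᵢ - √ρ ζ` with `ζ` and all `ξᵢ` independent standard normal. -/
noncomputable def equicorrelatedGaussian (ι : Type*) [Fintype ι] (ρ : ℝ) : Measure (ι → ℝ) :=
  ((gaussianReal 0 1).prod (Measure.pi fun _ : ι ↦ gaussianReal 0 1)).map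
    fun p i ↦ -√ρ * p.1 + √(1 - ρ) * p.2 i

variable {ρ : ℝ}

theorem hasLaw_equicorrelatedGaussian (ρ : ℝ) :
    HasLaw (fun p (i : ι) ↦ -√ρ * p.1 + √(1 - ρ) * p.2 i) (equicorrelatedGaussian ι ρ)
      ((gaussianReal 0 1).prod (Measure.pi fun _ : ι ↦ gaussianReal 0 1)) where
  map_eq := rfl
  aemeasurable := by fun_prop

instance isGaussian_equicorrelatedGaussian : IsGaussian (equicorrelatedGaussian ι ρ) := by
  have : IsGaussian (Measure.pi fun _ : ι ↦ gaussianReal 0 1) := isGaussian_pi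
  let T : ℝ × (ι → ℝ) →L[ℝ] ι → ℝ :=
    .pi fun i ↦ -√ρ • .fst ℝ ℝ (ι → ℝ) + √(1 - ρ) • (.proj i ∘L .snd ℝ ℝ (ι → ℝ))
  exact isGaussian_map T

theorem integral_eval_equicorrelatedGaussian (i : ι) :
    ∫ x, x i ∂(equicorrelatedGaussian ι ρ) = 0 := by
  have hfst : ∫ p : ℝ × (ι → ℝ), p.1
      ∂((gaussianReal 0 1).prod (Measure.pi fun _ : ι ↦ gaussianReal 0 1)) = 0 := by
    rw [integral_fun_fst fun z : ℝ ↦ z, integral_id_gaussianReal, smul_zero]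
  have hsnd : ∫ p : ℝ × (ι → ℝ), p.2 i
      ∂((gaussianReal 0 1).prod (Measure.pi fun _ : ι ↦ gaussianReal 0 1)) = 0 := by
    rw [integral_fun_snd fun x : ι → ℝ ↦ x i,
      integral_comp_eval (μ := fun _ : ι ↦ gaussianReal 0 1) (f := fun z : ℝ ↦ z)
        aestronglyMeasurable_id, integral_id_gaussianReal, smul_zero]
  have : IsGaussian (Measure.pi fun _ : ι ↦ gaussianReal 0 1) := isGaussian_pi
  have hintz : Integrable (fun z : ℝ ↦ z) (gaussianReal 0 1) :=
    (memLp_id_gaussianReal 1).integrable le_rfl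
  calc ∫ x, x i ∂(equicorrelatedGaussian ι ρ)
      = ∫ p : ℝ × (ι → ℝ), (-√ρ * p.1 + √(1 - ρ) * p.2 i)
          ∂((gaussianReal 0 1).prod (Measure.pi fun _ : ι ↦ gaussianReal 0 1)) :=
        ((hasLaw_equicorrelatedGaussian ρ).integral_comp (f := fun x ↦ x i)
          (measurable_pi_apply i).aestronglyMeasurable).symm
    _ = 0 := by
        rw [integral_add ((hintz.comp_fst _).const_mul _)
          (((integrable_eval_of_isGaussian i).comp_snd _).const_mul _), integral_const_mul,
          integral_const_mul, hfst, hsnd, mul_zero, mul_zero, add_zero]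

theorem covMatrix_equicorrelatedGaussian_apply [DecidableEq ι] (hρ : ρ ∈ Set.Icc 0 1) (i j : ι) :
    covMatrix (equicorrelatedGaussian ι ρ) i j = if i = j then 1 else ρ := by
  have : IsGaussian (Measure.pi fun _ : ι ↦ gaussianReal 0 1) := isGaussian_pi
  have hpi (k : ι) := memLp_two_eval_of_isGaussian (μ := Measure.pi fun _ : ι ↦ gaussianReal 0 1) k
  have hz : MemLp (fun z : ℝ ↦ -√ρ * z) 2 (gaussianReal 0 1) :=
    (memLp_id_gaussianReal 2).const_mul _
  have hvar : cov[fun z : ℝ ↦ -√ρ * z, fun z ↦ -√ρ * z; gaussianReal 0 1] = √ρ * √ρ := by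
    rw [covariance_self (by fun_prop), variance_const_mul, variance_fun_id_gaussianReal]
    simp [sq]
  have hcov : cov[fun x : ι → ℝ ↦ x i, fun x ↦ x j; Measure.pi fun _ ↦ gaussianReal 0 1]
      = (1 : Matrix ι ι ℝ) i j := congrFun₂ covMatrix_pi_gaussianReal i j
  calc covMatrix (equicorrelatedGaussian ι ρ) i j
      = cov[fun p ↦ -√ρ * p.1 + √(1 - ρ) * p.2 i, fun p ↦ -√ρ * p.1 + √(1 - ρ) * p.2 j;
          (gaussianReal 0 1).prod (Measure.pi fun _ : ι ↦ gaussianReal 0 1)] :=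
        covMatrix_map (hasLaw_equicorrelatedGaussian ρ).aemeasurable i j
    _ = ρ + (1 - ρ) * (1 : Matrix ι ι ℝ) i j := by
        rw [covariance_add_prod hz hz ((hpi i).const_mul _) ((hpi j).const_mul _)]
        simp only [hvar, covariance_const_mul_left, covariance_const_mul_right, hcov]
        linear_combination mul_self_sqrt hρ.1
          + (1 : Matrix ι ι ℝ) i j * mul_self_sqrt (sub_nonneg.2 hρ.2)
    _ = if i = j then 1 else ρ := by
        rw [Matrix.one_apply]; split_ifs <;> ring

theorem measureReal_Iic_equicorrelatedGaussian (hρ : ρ < 1) (t : ℝ) :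
    (equicorrelatedGaussian ι ρ).real (Set.Iic fun _ ↦ t)
      = ∫ z, cdf (gaussianReal 0 1) ((t + √ρ * z) / √(1 - ρ)) ^ Fintype.card ι
          ∂(gaussianReal 0 1) := by
  have hsqrt : 0 < √(1 - ρ) := sqrt_pos.2 (sub_pos.2 hρ)
  have hslice (z : ℝ) : Prod.mk z ⁻¹' ((fun (p : ℝ × (ι → ℝ)) i ↦
      -√ρ * p.1 + √(1 - ρ) * p.2 i) ⁻¹' Set.Iic fun _ ↦ t)
        = Set.pi Set.univ fun _ ↦ Set.Iic ((t + √ρ * z) / √(1 - ρ)) := by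
    ext x
    simp only [Set.mem_preimage, Set.mem_Iic, Pi.le_def, Set.mem_pi, Set.mem_univ, true_imp_iff,
      le_div_iff₀ hsqrt]
    exact forall_congr' fun i ↦ ⟨fun h ↦ by linarith, fun h ↦ by linarith⟩
  have hmeas : Measurable fun (p : ℝ × (ι → ℝ)) i ↦ -√ρ * p.1 + √(1 - ρ) * p.2 i := by fun_prop
  rw [equicorrelatedGaussian, map_measureReal_apply hmeas measurableSet_Iic,
    Measure.real, Measure.prod_apply (hmeas measurableSet_Iic), integral_eq_lintegral_of_nonneg_ae
      (.of_forall fun _ ↦ pow_nonneg (cdf_nonneg _ _) _)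
      (((monotone_cdf _).measurable.comp (by fun_prop)).pow_const _).aestronglyMeasurable]
  simp only [hslice, Measure.pi_pi, Finset.prod_const, Finset.card_univ,
    ENNReal.ofReal_pow (cdf_nonneg _ _), ofReal_cdf]

theorem measureReal_Iic_le_integral_cdf_pow {μ : Measure (ι → ℝ)} [IsGaussian μ]
    (hμ : ∀ i, ∫ x, x i ∂μ = 0) (hdiag : ∀ i, covMatrix μ i i = 1) (hρ : ρ ∈ Set.Ico 0 1)
    (hcov : ∀ i j, i ≠ j → covMatrix μ i j ≤ ρ) (t : ℝ) :
    μ.real (Set.Iic fun _ ↦ t)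
      ≤ ∫ z, cdf (gaussianReal 0 1) ((t + √ρ * z) / √(1 - ρ)) ^ Fintype.card ι
          ∂(gaussianReal 0 1) := by
  classical
  have hequi := covMatrix_equicorrelatedGaussian_apply (ι := ι) (Set.Ico_subset_Icc_self hρ)
  rw [← measureReal_Iic_equicorrelatedGaussian hρ.2]
  refine slepian_inequality hμ integral_eval_equicorrelatedGaussian (fun i ↦ ?_) (fun i j ↦ ?_) _
  · rw [hdiag, hequi, if_pos rfl]
  · rw [hequi]
    split_ifs with hij
    · exact hij ▸ (hdiag i).le
    · exact hcov i j hij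

end Equicorrelated

section Symmetrization

variable {ι : Type*}

/-- The linear map `x ↦ (x, -x)`, which turns a two-sided bound `|xᵢ| ≤ t` on all coordinates into
a one-sided one. -/
noncomputable def symmetrize (ι : Type*) : (ι → ℝ) →L[ℝ] ι ⊕ ι → ℝ :=
  .pi (Sum.elim (fun i ↦ .proj i) fun i ↦ -.proj i)

@[simp]
theorem symmetrize_apply_inl (x : ι → ℝ) (i : ι) : symmetrize ι x (.inl i) = x i := rfl

@[simp]
theorem symmetrize_apply_inr (x : ι → ℝ) (i : ι) : symmetrize ι x (.inr i) = -x i := rfl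

theorem preimage_symmetrize_Iic (t : ℝ) :
    symmetrize ι ⁻¹' Set.Iic (fun _ ↦ t) = {x | ∀ i, |x i| ≤ t} := by
  ext x
  simp [Pi.le_def, abs_le, forall_and, and_comm, neg_le]

variable [Countable ι] {μ : Measure (ι → ℝ)} {ρ : ℝ}

theorem covMatrix_map_symmetrize_self (hdiag : ∀ i, covMatrix μ i i = 1) (i : ι ⊕ ι) :
    covMatrix (μ.map (symmetrize ι)) i i = 1 := by
  rw [covMatrix_map (symmetrize ι).continuous.aemeasurable]
  rcases i with i | i <;>
    simpa [covMatrix, covariance_fun_neg_left, covariance_fun_neg_right] using hdiag i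

theorem covMatrix_map_symmetrize_le (hdiag : ∀ i, 0 ≤ covMatrix μ i i) (hρ : 0 ≤ ρ)
    (hcov : ∀ i j, i ≠ j → |covMatrix μ i j| ≤ ρ) {i j : ι ⊕ ι} (hij : i ≠ j) :
    covMatrix (μ.map (symmetrize ι)) i j ≤ ρ := by
  have hpos (i j : ι) (hij : i ≠ j) : covMatrix μ i j ≤ ρ := (abs_le.1 (hcov i j hij)).2
  have hneg (i j : ι) : -covMatrix μ i j ≤ ρ := by
    rcases eq_or_ne i j with rfl | hij
    · linarith [hdiag i]
    · exact neg_le.1 (abs_le.1 (hcov i j hij)).1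
  rw [covMatrix_map (symmetrize ι).continuous.aemeasurable]
  rcases i with i | i <;> rcases j with j | j <;>
    simp only [symmetrize_apply_inl, symmetrize_apply_inr, covariance_fun_neg_left,
      covariance_fun_neg_right, neg_neg]
  · exact hpos i j (by simpa using hij)
  · exact hneg i j
  · exact hneg i j
  · exact hpos i j (by simpa using hij)

theorem measureReal_forall_abs_le_le_integral_cdf_pow {ι : Type*} [Fintype ι]
    {μ : Measure (ι → ℝ)} [IsGaussian μ] {ρ : ℝ} (hμ : ∀ i, ∫ x, x i ∂μ = 0)
    (hdiag : ∀ i, covMatrix μ i i = 1) (hρ : ρ ∈ Set.Ico 0 1)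
    (hcov : ∀ i j, i ≠ j → |covMatrix μ i j| ≤ ρ) (t : ℝ) :
    μ.real {x | ∀ i, |x i| ≤ t}
      ≤ ∫ z, cdf (gaussianReal 0 1) ((t + √ρ * z) / √(1 - ρ)) ^ (2 * Fintype.card ι)
          ∂(gaussianReal 0 1) := by
  have hmean (i : ι ⊕ ι) : ∫ y, y i ∂(μ.map (symmetrize ι)) = 0 := by
    rw [integral_map (symmetrize ι).continuous.aemeasurable
      (measurable_pi_apply i).aestronglyMeasurable]
    rcases i with i | i <;> simp [integral_neg, hμ]
  rw [← preimage_symmetrize_Iic, ← map_measureReal_apply (symmetrize ι).measurable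
    measurableSet_Iic, two_mul, ← Fintype.card_sum]
  exact measureReal_Iic_le_integral_cdf_pow hmean (covMatrix_map_symmetrize_self hdiag) hρ
    (fun _ _ ↦ covMatrix_map_symmetrize_le (fun i ↦ (hdiag i).symm ▸ zero_le_one) hρ.1 hcov) t

end Symmetrization

section CenteredGaussianVec

variable {Ω : Type*} [MeasureSpace Ω] {n : ℕ} {X : Fin n → Ω → ℝ} {R : Matrix (Fin n) (Fin n) ℝ}

theorem IsCenteredGaussianVec.hasGaussianLaw (hX : IsCenteredGaussianVec X R) :
    HasGaussianLaw (fun ω i ↦ X i ω) (ℙ : Measure Ω) where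
  isGaussian_map := by
    refine isGaussian_of_map_eq_gaussianReal fun L ↦ ⟨0, toNNReal (∑ i, ∑ j,
      L (Pi.single i 1) * R i j * L (Pi.single j 1)), ?_⟩
    rw [Measure.map_map L.measurable (measurable_pi_lambda _ hX.1),
      ← hX.2.2 fun i ↦ L (Pi.single i 1)]
    congr 1 with ω
    rw [Function.comp_apply, clm_apply_eq_sum_mul_single]
    simp only [mul_comm]

theorem IsCenteredGaussianVec.variance_sum_mul (hX : IsCenteredGaussianVec X R) (a : Fin n → ℝ) :
    Var[fun ω ↦ ∑ i, a i * X i ω] = max (∑ i, ∑ j, a i * R i j * a j) 0 := by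
  have hlaw : HasLaw (fun ω ↦ ∑ i, a i * X i ω) (gaussianReal 0 _) ℙ :=
    ⟨(Finset.measurable_fun_sum _ fun i _ ↦ (hX.1 i).const_mul _).aemeasurable, hX.2.2 a⟩
  rw [hlaw.variance_eq, variance_id_gaussianReal, coe_toNNReal']

theorem IsCenteredGaussianVec.hasLaw_eval (hX : IsCenteredGaussianVec X R) (i : Fin n) :
    HasLaw (X i) (gaussianReal 0 1) ℙ where
  aemeasurable := (hX.1 i).aemeasurable
  map_eq := by simpa [Pi.single_apply, hX.2.1] using hX.2.2 (Pi.single i 1)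

theorem IsCenteredGaussianVec.integral_eq_zero (hX : IsCenteredGaussianVec X R) (i : Fin n) :
    ∫ ω, X i ω = 0 := by
  rw [(hX.hasLaw_eval i).integral_eq, integral_id_gaussianReal]

theorem IsCenteredGaussianVec.covariance_eq (hX : IsCenteredGaussianVec X R) (i j : Fin n) :
    cov[X i, X j] = (R i j + R j i) / 2 := by
  have hprob : IsProbabilityMeasure (ℙ : Measure Ω) := hX.hasGaussianLaw.isProbabilityMeasure
  have hmemLp (k : Fin n) : MemLp (X k) 2 ℙ := (hX.hasLaw_eval k).hasGaussianLaw.memLp_two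
  have hvar (k : Fin n) : Var[X k] = 1 := by
    rw [(hX.hasLaw_eval k).variance_eq, variance_id_gaussianReal, NNReal.coe_one]
  set q := R i j + R j i
  -- The weight `s` is small enough for the truncation `max · 0` in `variance_sum_mul` to be void.
  set s := 1 / (1 + |q|) with hs
  have hs_pos : 0 < s := by positivity
  have hcomb : Var[fun ω ↦ X i ω + s * X j ω] = max (1 + s ^ 2 + s * q) 0 := by
    convert hX.variance_sum_mul (Pi.single i 1 + Pi.single j s) using 2
    · simp [add_mul, Finset.sum_add_distrib, Pi.single_apply]
    · simp [add_mul, mul_add, Finset.sum_add_distrib, Pi.single_apply, hX.2.1]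
      ring
  have hnonneg : 0 ≤ 1 + s ^ 2 + s * q := by
    have : s * |q| ≤ 1 := by rw [hs, one_div_mul_eq_div, div_le_one (by positivity)]; linarith
    nlinarith [neg_abs_le q, sq_nonneg s]
  rw [variance_fun_add (hmemLp i) ((hmemLp j).const_mul s), variance_const_mul,
    covariance_const_mul_right, hvar, hvar, max_eq_left hnonneg] at hcomb
  have : s * (2 * cov[X i, X j]) = s * q := by linarith
  linarith [mul_left_cancel₀ hs_pos.ne' this]

theorem IsCenteredGaussianVec.measureReal_iSup_abs_le (hX : IsCenteredGaussianVec X R) {ρ : ℝ}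
    (hρ : ρ ∈ Set.Ico 0 1) (hR : ∀ i j, i ≠ j → |R i j| ≤ ρ) (t : ℝ) :
    (ℙ : Measure Ω).real {ω | ⨆ i, |X i ω| ≤ t}
      ≤ ∫ z, cdf (gaussianReal 0 1) ((t + √ρ * z) / √(1 - ρ)) ^ (2 * n) ∂(gaussianReal 0 1) := by
  have hmeas : Measurable fun ω i ↦ X i ω := measurable_pi_lambda _ hX.1
  have hprob : IsProbabilityMeasure (ℙ : Measure Ω) := hX.hasGaussianLaw.isProbabilityMeasure
  have hgauss := hX.hasGaussianLaw.isGaussian_map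
  have hset : MeasurableSet {x : Fin n → ℝ | ∀ i, |x i| ≤ t} :=
    preimage_symmetrize_Iic (ι := Fin n) t ▸
      (symmetrize (Fin n)).measurable measurableSet_Iic
  have hmean (i : Fin n) : ∫ x, x i ∂(Measure.map (fun ω i ↦ X i ω) ℙ) = 0 := by
    rw [integral_map hmeas.aemeasurable (measurable_pi_apply i).aestronglyMeasurable,
      hX.integral_eq_zero]
  have hcov (i j : Fin n) :
      covMatrix (Measure.map (fun ω i ↦ X i ω) ℙ) i j = (R i j + R j i) / 2 :=
    (covMatrix_map hmeas.aemeasurable i j).trans (hX.covariance_eq i j)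
  have hcov_le (i j : Fin n) (hij : i ≠ j) :
      |covMatrix (Measure.map (fun ω i ↦ X i ω) ℙ) i j| ≤ ρ := by
    rw [hcov, abs_div, abs_two, div_le_iff₀ two_pos]
    linarith [abs_add_le (R i j) (R j i), hR i j hij, hR j i hij.symm]
  calc (ℙ : Measure Ω).real {ω | ⨆ i, |X i ω| ≤ t}
      ≤ (ℙ : Measure Ω).real {ω | ∀ i, |X i ω| ≤ t} :=
        measureReal_mono fun ω hω i ↦
          (le_ciSup (f := fun i ↦ |X i ω|) (Set.finite_range _).bddAbove i).trans hω
    _ = (Measure.map (fun ω i ↦ X i ω) ℙ).real {x | ∀ i, |x i| ≤ t} :=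
        (map_measureReal_apply hmeas hset).symm
    _ ≤ _ := by
        simpa using measureReal_forall_abs_le_le_integral_cdf_pow hmean
          (fun i ↦ by rw [hcov, hX.2.1, add_self_div_two]) hρ hcov_le t

end CenteredGaussianVec

section GaussianTail

/-- The constant `κ = e⁻¹ / √(2π)` in the lower bound `κ (1 + u)⁻¹ exp (-u² / 2)` for the tail of
the standard normal distribution. -/
noncomputable def gaussianTailConst : ℝ := (√(2 * π))⁻¹ * exp (-1)

theorem gaussianTailConst_pos : 0 < gaussianTailConst := by
  unfold gaussianTailConst
  positivity

-- On `(u, u + (1 + u)⁻¹]` we have `y² ≤ u² + 2`, so the density is at least `κ exp (-u² / 2)`.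
theorem gaussianTailConst_div_le_measureReal_Ioi {u : ℝ} (hu : 0 ≤ u) :
    gaussianTailConst / (1 + u) * exp (-u ^ 2 / 2) ≤ (gaussianReal 0 1).real (Set.Ioi u) := by
  have hwidth : 0 < (1 + u)⁻¹ := by positivity
  have hpdf (y : ℝ) (hy : y ∈ Set.Ioc u (u + (1 + u)⁻¹)) :
      gaussianTailConst * exp (-u ^ 2 / 2) ≤ gaussianPDFReal 0 1 y := by
    have hy_sq : y ^ 2 ≤ u ^ 2 + 2 := by
      have h1 : (1 + u) * (1 + u)⁻¹ = 1 := mul_inv_cancel₀ (by positivity)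
      have h2 : (1 + u)⁻¹ ≤ 1 := inv_le_one_of_one_le₀ (by linarith)
      nlinarith [hy.1, hy.2, pow_le_pow_left₀ (hu.trans hy.1.le) hy.2 2]
    simp only [gaussianPDFReal_def, gaussianTailConst, NNReal.coe_one, mul_one, sub_zero]
    rw [mul_assoc, ← exp_add]
    gcongr
    linarith
  calc gaussianTailConst / (1 + u) * exp (-u ^ 2 / 2)
      = ∫ _ in Set.Ioc u (u + (1 + u)⁻¹), gaussianTailConst * exp (-u ^ 2 / 2) := by
        rw [setIntegral_const, volume_real_Ioc_of_le (by linarith), smul_eq_mul]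
        ring
    _ ≤ ∫ y in Set.Ioc u (u + (1 + u)⁻¹), gaussianPDFReal 0 1 y :=
        setIntegral_mono_on (integrable_const _) (integrable_gaussianPDFReal 0 1).integrableOn
          measurableSet_Ioc hpdf
    _ = (gaussianReal 0 1).real (Set.Ioc u (u + (1 + u)⁻¹)) := by
        rw [Measure.real, gaussianReal_apply_eq_integral 0 one_ne_zero, ENNReal.toReal_ofReal
          (integral_nonneg fun _ ↦ gaussianPDFReal_nonneg 0 1 _)]
    _ ≤ (gaussianReal 0 1).real (Set.Ioi u) := measureReal_mono Set.Ioc_subset_Ioi_self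

theorem cdf_pow_le_exp_neg {μ : Measure ℝ} [IsProbabilityMeasure μ] (N : ℕ) {u r : ℝ}
    (hr : r ≤ μ.real (Set.Ioi u)) : cdf μ u ^ N ≤ exp (-(N * r)) := by
  have hcompl : cdf μ u = 1 - μ.real (Set.Ioi u) := by
    rw [cdf_eq_real, ← Set.compl_Ioi, probReal_compl_eq_one_sub measurableSet_Ioi]
  calc cdf μ u ^ N ≤ exp (-r) ^ N := by
        gcongr
        · exact cdf_nonneg _ _
        · linarith [add_one_le_exp (-r)]
    _ = exp (-(N * r)) := by rw [← exp_nat_mul, mul_neg]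

theorem cdf_gaussianReal_pow_le_of_nonpos (N : ℕ) {u : ℝ} (hu : u ≤ 0) :
    cdf (gaussianReal 0 1) u ^ N ≤ exp (-(gaussianTailConst * N)) := by
  rw [mul_comm]
  refine cdf_pow_le_exp_neg N (le_trans ?_ (measureReal_mono (Set.Ioi_subset_Ioi hu)))
  simpa using gaussianTailConst_div_le_measureReal_Ioi le_rfl

theorem exp_neg_mul_exp_le (m : ℕ) {k : ℝ} (hk : 0 < k) (s : ℝ) :
    exp (-(k * exp s)) ≤ m.factorial / k ^ m * exp (-(m * s)) := by
  have hpow := pow_div_factorial_le_exp (k * exp s) (by positivity) m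
  rw [exp_neg, inv_le_comm₀ (exp_pos _) (by positivity)]
  refine le_trans (le_of_eq ?_) hpow
  rw [mul_pow, ← exp_nat_mul, exp_neg]
  field_simp

theorem cdf_gaussianReal_pow_le_of_le (N m : ℕ) {k u w : ℝ} (hk : 0 < k) (hu : 0 ≤ u)
    (huw : u ≤ w) (hw : k ≤ N * (gaussianTailConst / (1 + w) * exp (-w ^ 2 / 2))) :
    cdf (gaussianReal 0 1) u ^ N ≤ m.factorial / k ^ m * exp (-(m * (w * (w - u) / 2))) := by
  have hκ := gaussianTailConst_pos
  have htail : k * exp (w * (w - u) / 2)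
      ≤ N * (gaussianTailConst / (1 + u) * exp (-u ^ 2 / 2)) := by
    calc k * exp (w * (w - u) / 2)
        ≤ N * (gaussianTailConst / (1 + w) * exp (-w ^ 2 / 2)) * exp (w * (w - u) / 2) := by gcongr
      _ = N * (gaussianTailConst / (1 + w) * exp (-w ^ 2 / 2 + w * (w - u) / 2)) := by
          rw [exp_add]; ring
      _ ≤ N * (gaussianTailConst / (1 + u) * exp (-u ^ 2 / 2)) := by
          gcongr
          nlinarith [mul_nonneg hu (sub_nonneg.2 huw)]
  calc cdf (gaussianReal 0 1) u ^ N
      ≤ exp (-(N * (gaussianTailConst / (1 + u) * exp (-u ^ 2 / 2)))) :=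
        cdf_pow_le_exp_neg N (gaussianTailConst_div_le_measureReal_Ioi hu)
    _ ≤ exp (-(k * exp (w * (w - u) / 2))) := by gcongr
    _ ≤ m.factorial / k ^ m * exp (-(m * (w * (w - u) / 2))) := exp_neg_mul_exp_le m hk _

end GaussianTail

section GaussianIntegral

theorem integral_exp_neg_mul_abs_sub {x : ℝ} (hx : 0 < x) (a : ℝ) :
    ∫ z : ℝ, exp (-(x * |z - a|)) = 2 / x := by
  rw [integral_sub_right_eq_self (fun z ↦ exp (-(x * |z|))) a,
    integral_comp_abs (f := fun z ↦ exp (-(x * z)))]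
  simp only [← neg_mul, integral_exp_mul_Ioi (neg_lt_zero.2 hx) 0]
  simp [div_eq_mul_inv]

-- For `z ≤ x` the identity `z² + 4 x (x - z) = (2 x - z)²` reflects `z` to the right of `x`.
theorem exp_mul_min_exp_le (x z : ℝ) :
    exp (-z ^ 2 / 2) * min 1 (exp (-(2 * x * (x - z))))
      ≤ exp (-x ^ 2 / 2) * exp (-(x * |z - x|)) := by
  rw [← exp_add]
  rcases le_total z x with h | h
  · refine (mul_le_mul_of_nonneg_left (min_le_right _ _) (exp_pos _).le).trans ?_
    rw [← exp_add, exp_le_exp, abs_of_nonpos (by linarith)]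
    nlinarith [sq_nonneg (z - x)]
  · refine (mul_le_mul_of_nonneg_left (min_le_left _ _) (exp_pos _).le).trans ?_
    rw [mul_one, exp_le_exp, abs_of_nonneg (by linarith)]
    nlinarith [sq_nonneg (z - x)]

theorem integral_min_exp_gaussianReal_le {x : ℝ} (hx : 0 < x) :
    ∫ z, min 1 (exp (-(2 * x * (x - z)))) ∂(gaussianReal 0 1) ≤ exp (-x ^ 2 / 2) * (2 / x) := by
  have hsqrt : (√(2 * π))⁻¹ ≤ 1 :=
    inv_le_one_of_one_le₀ (one_le_sqrt.2 (by linarith [pi_gt_three]))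
  have hint : Integrable fun z ↦ exp (-(x * |z - x|)) :=
    .of_integral_ne_zero (by rw [integral_exp_neg_mul_abs_sub hx]; positivity)
  rw [integral_gaussianReal_eq_integral_smul one_ne_zero, ← integral_exp_neg_mul_abs_sub hx x,
    ← integral_const_mul]
  refine integral_mono_of_nonneg (.of_forall fun z ↦ ?_) (hint.const_mul _)
    (.of_forall fun z ↦ ?_)
  · exact mul_nonneg (gaussianPDFReal_nonneg _ _ _) (le_min zero_le_one (exp_pos _).le)
  · simp only [gaussianPDFReal_def, NNReal.coe_one, mul_one, sub_zero, smul_eq_mul]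
    rw [mul_assoc]
    exact (mul_le_of_le_one_left (by positivity) hsqrt).trans (exp_mul_min_exp_le x z)

variable {N m : ℕ} {a c k x : ℝ}

theorem cdf_gaussianReal_pow_le_add_mul_min (ha : 0 ≤ a) (hc : 0 < c) (hx : 0 < x) (hk : 0 < k)
    (hm : 4 / c ^ 2 ≤ m)
    (hw : k ≤ N * (gaussianTailConst / (1 + (a + c * x)) * exp (-(a + c * x) ^ 2 / 2))) (z : ℝ) :
    cdf (gaussianReal 0 1) (a + c * z) ^ N ≤ exp (-(gaussianTailConst * N))
      + max 1 (m.factorial / k ^ m) * min 1 (exp (-(2 * x * (x - z)))) := by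
  rcases le_total (a + c * z) 0 with hu | hu
  · exact (cdf_gaussianReal_pow_le_of_nonpos N hu).trans (le_add_of_nonneg_right (by positivity))
  refine le_add_of_nonneg_of_le (exp_pos _).le ?_
  rcases le_total x z with hxz | hzx
  · rw [min_eq_left (one_le_exp (by nlinarith)), mul_one]
    exact (pow_le_one₀ (cdf_nonneg _ _) (cdf_le_one _ _)).trans (le_max_left _ _)
  have hexponent : 2 * x * (x - z) ≤ m * ((a + c * x) * ((a + c * x) - (a + c * z)) / 2) := by
    have : 0 ≤ x - z := sub_nonneg.2 hzx
    calc 2 * x * (x - z) = 4 / c ^ 2 * (c * x * (c * (x - z)) / 2) := by field_simp; ring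
      _ ≤ m * ((a + c * x) * (c * (x - z)) / 2) := by gcongr; linarith
      _ = m * ((a + c * x) * ((a + c * x) - (a + c * z)) / 2) := by ring
  rw [min_eq_right (exp_le_one_iff.2 (by nlinarith))]
  calc cdf (gaussianReal 0 1) (a + c * z) ^ N
      ≤ m.factorial / k ^ m * exp (-(m * ((a + c * x) * ((a + c * x) - (a + c * z)) / 2))) :=
        cdf_gaussianReal_pow_le_of_le N m hk hu (by gcongr) hw
    _ ≤ max 1 (m.factorial / k ^ m) * exp (-(2 * x * (x - z))) := by
        gcongr
        exact le_max_right _ _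

theorem integral_cdf_gaussianReal_pow_le (ha : 0 ≤ a) (hc : 0 < c) (hx : 0 < x) (hk : 0 < k)
    (hm : 4 / c ^ 2 ≤ m)
    (hw : k ≤ N * (gaussianTailConst / (1 + (a + c * x)) * exp (-(a + c * x) ^ 2 / 2))) :
    ∫ z, cdf (gaussianReal 0 1) (a + c * z) ^ N ∂(gaussianReal 0 1)
      ≤ exp (-(gaussianTailConst * N))
        + max 1 (m.factorial / k ^ m) * (exp (-x ^ 2 / 2) * (2 / x)) := by
  have hmin : Integrable (fun z ↦ min 1 (exp (-(2 * x * (x - z))))) (gaussianReal 0 1) :=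
    .of_bound (by fun_prop) 1 <| .of_forall fun z ↦ by
      rw [norm_of_nonneg (le_min zero_le_one (exp_pos _).le)]
      exact min_le_left _ _
  calc ∫ z, cdf (gaussianReal 0 1) (a + c * z) ^ N ∂(gaussianReal 0 1)
      ≤ ∫ z, (exp (-(gaussianTailConst * N))
          + max 1 (m.factorial / k ^ m) * min 1 (exp (-(2 * x * (x - z))))) ∂(gaussianReal 0 1) :=
        integral_mono_of_nonneg (.of_forall fun _ ↦ pow_nonneg (cdf_nonneg _ _) _)
          ((integrable_const _).add (hmin.const_mul _))
          (.of_forall (cdf_gaussianReal_pow_le_add_mul_min ha hc hx hk hm hw))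
    _ = exp (-(gaussianTailConst * N)) + max 1 (m.factorial / k ^ m)
          * ∫ z, min 1 (exp (-(2 * x * (x - z)))) ∂(gaussianReal 0 1) := by
        rw [integral_add (integrable_const _) (hmin.const_mul _), integral_const_mul,
          integral_const, probReal_univ, one_smul]
    _ ≤ _ := by
        gcongr
        exact integral_min_exp_gaussianReal_le hx

end GaussianIntegral

section Asymptotics

/-- The level `w` at which `exp y` independent standard normal variables have an expected number of
exceedances bounded away from `0` and `∞`: it solves `exp y * exp (-w² / 2) = √y`. -/
noncomputable def criticalLevel (y : ℝ) : ℝ := √(2 * y - log y)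

variable {c y δ : ℝ}

theorem criticalLevel_sq (hy : 0 < y) : criticalLevel y ^ 2 = 2 * y - log y :=
  sq_sqrt (by linarith [log_le_sub_one_of_pos hy])

theorem exp_mul_exp_neg_criticalLevel_sq (hy : 0 < y) :
    exp y * exp (-criticalLevel y ^ 2 / 2) = √y := by
  rw [criticalLevel_sq hy, ← exp_add, sqrt_eq_rpow, rpow_def_of_pos hy]
  ring_nf

theorem one_add_criticalLevel_le (hy : 1 ≤ y) : 1 + criticalLevel y ≤ 3 * √y := by
  have hone : 1 ≤ √y := one_le_sqrt.2 hy
  have hle : criticalLevel y ≤ 2 * √y := by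
    rw [criticalLevel, sqrt_le_left (by positivity), mul_pow, sq_sqrt (by positivity)]
    linarith [log_nonneg hy]
  linarith

theorem gaussianTailConst_div_three_le (hy : 1 ≤ y) :
    gaussianTailConst / 3 ≤ exp y
      * (gaussianTailConst / (1 + criticalLevel y) * exp (-criticalLevel y ^ 2 / 2)) := by
  have hκ := gaussianTailConst_pos
  have hw : 0 < 1 + criticalLevel y := add_pos_of_pos_of_nonneg one_pos (sqrt_nonneg _)
  have hy0 : 0 < y := one_pos.trans_le hy
  rw [mul_left_comm, exp_mul_exp_neg_criticalLevel_sq hy0, div_mul_eq_mul_div,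
    div_le_div_iff₀ three_pos hw, mul_assoc]
  gcongr
  linarith [one_add_criticalLevel_le hy]

theorem le_sq_criticalLevel_sub (hδ : 0 ≤ δ) (hy : 0 < y) :
    (1 - δ) ^ 2 * (2 * y) - (1 - δ) * log y ≤ (criticalLevel y - δ * √(2 * y)) ^ 2 := by
  have hL : √(2 * y) ^ 2 = 2 * y := sq_sqrt (by positivity)
  have hw := criticalLevel_sq hy
  nlinarith [mul_nonneg hδ (sq_nonneg (criticalLevel y - √(2 * y)))]

theorem exp_neg_sq_div_two_le (hδ : 0 ≤ δ) (hy : 0 < y) :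
    exp (-((criticalLevel y - δ * √(2 * y)) / c) ^ 2 / 2)
      ≤ exp (-((1 - δ) ^ 2 / c ^ 2 * y)) * y ^ ((1 - δ) / c ^ 2 / 2) := by
  rw [rpow_def_of_pos hy, ← exp_add, exp_le_exp]
  have := div_le_div_of_nonneg_right (le_sq_criticalLevel_sub hδ hy) (sq_nonneg c)
  rw [sub_div] at this
  rw [div_pow]
  ring_nf at this ⊢
  linarith

theorem eventually_le_criticalLevel_sub (hδ : δ ∈ Set.Ico 0 1) :
    ∀ᶠ y in Filter.atTop, (1 - δ) / 2 * √(2 * y) ≤ criticalLevel y - δ * √(2 * y) := by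
  have hgap : 0 < 2 * (1 - ((1 + δ) / 2) ^ 2) := by nlinarith [hδ.1, hδ.2]
  filter_upwards [isLittleO_log_id_atTop.def hgap, Filter.eventually_ge_atTop 1] with y hlog hy
  have hlog' : log y ≤ 2 * (1 - ((1 + δ) / 2) ^ 2) * y := by
    simpa [abs_of_nonneg (log_nonneg hy), abs_of_pos (one_pos.trans_le hy)] using hlog
  suffices (1 + δ) / 2 * √(2 * y) ≤ criticalLevel y by linarith
  refine le_sqrt_of_sq_le ?_
  rw [mul_pow, sq_sqrt (by linarith)]
  linear_combination hlog'

theorem exp_mul_two_div_isBigO (hδ : δ ∈ Set.Ico 0 1) (hc : 0 < c) :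
    (fun y ↦ exp (-((criticalLevel y - δ * √(2 * y)) / c) ^ 2 / 2)
        * (2 / ((criticalLevel y - δ * √(2 * y)) / c)))
      =O[Filter.atTop] fun y ↦
        exp (-((1 - δ) ^ 2 / c ^ 2 * y)) * y ^ (((1 - δ) / c ^ 2 - 1) / 2) := by
  have hexp : (fun y ↦ exp (-((criticalLevel y - δ * √(2 * y)) / c) ^ 2 / 2)) =O[Filter.atTop]
      fun y ↦ exp (-((1 - δ) ^ 2 / c ^ 2 * y)) * y ^ ((1 - δ) / c ^ 2 / 2) := by
    refine .of_norm_eventuallyLE ?_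
    filter_upwards [Filter.eventually_gt_atTop 0] with y hy
    rw [norm_of_nonneg (exp_pos _).le]
    exact exp_neg_sq_div_two_le hδ.1 hy
  have hdiv : (fun y ↦ 2 / ((criticalLevel y - δ * √(2 * y)) / c)) =O[Filter.atTop]
      fun y ↦ y ^ (-(1 / 2) : ℝ) := by
    refine .of_bound (4 * c / (1 - δ)) ?_
    filter_upwards [eventually_le_criticalLevel_sub hδ, Filter.eventually_gt_atTop 0] with y hle hy
    have hδ' : 0 < 1 - δ := sub_pos.2 hδ.2
    have hx : (1 - δ) / 2 * √y / c ≤ (criticalLevel y - δ * √(2 * y)) / c := by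
      gcongr
      exact le_trans (by gcongr; linarith) hle
    have hx_pos : 0 < (1 - δ) / 2 * √y / c := by positivity
    rw [norm_of_nonneg (div_pos two_pos (hx_pos.trans_le hx)).le, norm_of_nonneg (by positivity),
      rpow_neg hy.le, ← sqrt_eq_rpow]
    calc 2 / ((criticalLevel y - δ * √(2 * y)) / c) ≤ 2 / ((1 - δ) / 2 * √y / c) := by gcongr
      _ = 4 * c / (1 - δ) * (√y)⁻¹ := by field_simp; ring
  refine (hexp.mul hdiv).congr' .rfl ?_
  filter_upwards [Filter.eventually_gt_atTop 0] with y hy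
  rw [mul_assoc, ← rpow_add hy]
  ring_nf

theorem exp_neg_mul_isLittleO_rpow_mul_log_rpow {b : ℝ} (hb : 0 < b) (p q : ℝ) :
    (fun x ↦ exp (-b * x)) =o[Filter.atTop] fun x ↦ x ^ p * log x ^ q := by
  have hlog : (fun x ↦ x ^ (-1 : ℝ)) =O[Filter.atTop] fun x ↦ log x ^ q := by
    refine ((isLittleO_log_rpow_rpow_atTop (-q) one_pos).isBigO.inv_rev ?_).congr' ?_ ?_
    · filter_upwards [Filter.eventually_gt_atTop 1] with x hx hzero
      exact absurd hzero (rpow_pos_of_pos (log_pos hx) _).ne'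
    · filter_upwards [Filter.eventually_gt_atTop 1] with x hx
      rw [rpow_neg (by linarith)]
    · filter_upwards [Filter.eventually_gt_atTop 1] with x hx
      rw [rpow_neg (log_pos hx).le, inv_inv]
  refine ((isLittleO_exp_neg_mul_rpow_atTop hb (p - 1)).congr' .rfl ?_).trans_isBigO
    ((Asymptotics.isBigO_refl (fun x ↦ x ^ p) _).mul hlog)
  filter_upwards [Filter.eventually_gt_atTop 0] with x hx
  rw [← rpow_add hx, sub_eq_add_neg]

theorem exists_eventually_integral_cdf_gaussianReal_pow_le (hδ : δ ∈ Set.Ico 0 1) (hc : 0 < c) :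
    ∃ M : ℝ, ∀ᶠ N : ℕ in Filter.atTop,
      ∫ z, cdf (gaussianReal 0 1) (δ * √(2 * log N) + c * z) ^ N ∂(gaussianReal 0 1)
        ≤ exp (-gaussianTailConst * N)
          + M * (exp (-((criticalLevel (log N) - δ * √(2 * log N)) / c) ^ 2 / 2)
            * (2 / ((criticalLevel (log N) - δ * √(2 * log N)) / c))) := by
  obtain ⟨m, hm⟩ := exists_nat_ge (4 / c ^ 2)
  have hlog : Filter.Tendsto (fun N : ℕ ↦ log N) Filter.atTop Filter.atTop :=
    tendsto_log_atTop.comp tendsto_natCast_atTop_atTop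
  refine ⟨max 1 (m.factorial / (gaussianTailConst / 3) ^ m), ?_⟩
  filter_upwards [hlog.eventually (eventually_le_criticalLevel_sub hδ), hlog.eventually_ge_atTop 1,
    Filter.eventually_gt_atTop 0] with N hgap hlogN hN
  have hδ' : 0 < 1 - δ := sub_pos.2 hδ.2
  have hx : 0 < (criticalLevel (log N) - δ * √(2 * log N)) / c :=
    div_pos (lt_of_lt_of_le (by positivity) hgap) hc
  have hlevel : δ * √(2 * log N) + c * ((criticalLevel (log N) - δ * √(2 * log N)) / c)
      = criticalLevel (log N) := by
    rw [mul_div_cancel₀ _ hc.ne', add_sub_cancel]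
  have htail := gaussianTailConst_div_three_le hlogN
  rw [exp_log (by exact_mod_cast hN), ← hlevel] at htail
  rw [neg_mul]
  exact integral_cdf_gaussianReal_pow_le (mul_nonneg hδ.1 (sqrt_nonneg _)) hc hx
    (div_pos gaussianTailConst_pos three_pos) hm htail

theorem integral_cdf_gaussianReal_pow_isBigO (hδ : δ ∈ Set.Ico 0 1) (hc : 0 < c) :
    (fun N : ℕ ↦ ∫ z, cdf (gaussianReal 0 1) (δ * √(2 * log N) + c * z) ^ N ∂(gaussianReal 0 1))
      =O[Filter.atTop] fun N : ℕ ↦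
        (N : ℝ) ^ (-((1 - δ) ^ 2 / c ^ 2)) * log N ^ (((1 - δ) / c ^ 2 - 1) / 2) := by
  obtain ⟨M, hM⟩ := exists_eventually_integral_cdf_gaussianReal_pow_le hδ hc
  have hlog : Filter.Tendsto (fun N : ℕ ↦ log N) Filter.atTop Filter.atTop :=
    tendsto_log_atTop.comp tendsto_natCast_atTop_atTop
  have hmain := ((exp_mul_two_div_isBigO hδ hc).comp_tendsto hlog).congr' (g₂ := fun N : ℕ ↦
    (N : ℝ) ^ (-((1 - δ) ^ 2 / c ^ 2)) * log N ^ (((1 - δ) / c ^ 2 - 1) / 2)) .rfl (by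
      filter_upwards [Filter.eventually_gt_atTop 0] with N hN
      rw [Function.comp_apply, rpow_def_of_pos (Nat.cast_pos.2 hN : (0 : ℝ) < N), mul_neg,
        mul_comm (log N)])
  have hneg := (exp_neg_mul_isLittleO_rpow_mul_log_rpow gaussianTailConst_pos
    (-((1 - δ) ^ 2 / c ^ 2)) (((1 - δ) / c ^ 2 - 1) / 2)).comp_tendsto tendsto_natCast_atTop_atTop
  refine .trans (.of_norm_eventuallyLE ?_) (hneg.isBigO.add (hmain.const_mul_left M))
  filter_upwards [hM] with N hN
  rwa [norm_of_nonneg (integral_nonneg fun _ ↦ pow_nonneg (cdf_nonneg _ _) _)]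

theorem exists_integral_cdf_gaussianReal_pow_le {δ ρ : ℝ} (hδ : δ ∈ Set.Ico 0 1)
    (hρ : ρ ∈ Set.Ioo 0 1) :
    ∃ C : ℝ, 0 < C ∧ ∀ N : ℕ, 2 ≤ N →
      ∫ z, cdf (gaussianReal 0 1) ((δ * √(2 * (1 - ρ) * log N) + √ρ * z) / √(1 - ρ)) ^ N
          ∂(gaussianReal 0 1)
        ≤ C * (N : ℝ) ^ (-((1 - ρ) * (1 - δ) ^ 2 / ρ))
          * log N ^ (((1 - ρ) * (1 - δ) / ρ - 1) / 2) := by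
  have hρ0 : 0 < ρ := hρ.1
  have hρ1 : 0 < 1 - ρ := sub_pos.2 hρ.2
  have hdiv (a : ℝ) : a / (√ρ / √(1 - ρ)) ^ 2 = (1 - ρ) * a / ρ := by
    rw [div_pow, sq_sqrt hρ0.le, sq_sqrt hρ1.le, div_div_eq_mul_div, mul_comm]
  obtain ⟨C, hC, hbound⟩ := Asymptotics.bound_of_isBigO_nat_atTop
    (integral_cdf_gaussianReal_pow_isBigO hδ (div_pos (sqrt_pos.2 hρ0) (sqrt_pos.2 hρ1)))
  refine ⟨C, hC, fun N hN ↦ ?_⟩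
  have hlog : 0 < log N := log_pos (by exact_mod_cast hN)
  have : (0 : ℝ) < N := by positivity
  have hthreshold (z : ℝ) : (δ * √(2 * (1 - ρ) * log N) + √ρ * z) / √(1 - ρ)
      = δ * √(2 * log N) + √ρ / √(1 - ρ) * z := by
    rw [mul_right_comm 2, sqrt_mul' _ hρ1.le]
    field_simp
  simp only [hthreshold]
  refine (le_norm_self _).trans ((hbound (by positivity)).trans_eq ?_)
  rw [norm_of_nonneg (by positivity), hdiv, hdiv, mul_assoc]

end Asymptotics

theorem small_ball_upper_bound (δ₀ ρ₀ : ℝ)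
    (hδ : δ₀ ∈ Set.Ioo (0 : ℝ) 1) (hρ : ρ₀ ∈ Set.Ioo (0 : ℝ) 1) :
    ∃ C : ℝ, 0 < C ∧
      ∀ (Ω : Type) [MeasureSpace Ω], IsProbabilityMeasure (ℙ : Measure Ω) →
        ∀ (n : ℕ), 2 ≤ n →
          ∀ (X : Fin n → Ω → ℝ) (R : Matrix (Fin n) (Fin n) ℝ),
            IsCenteredGaussianVec X R →
            (∀ i j, i ≠ j → |R i j| ≤ ρ₀) →
            (ℙ : Measure Ω) {ω | (⨆ i, |X i ω|)
                ≤ δ₀ * Real.sqrt (2 * (1 - ρ₀) * Real.log (2 * n))}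
              ≤ ENNReal.ofReal
                  (C * (2 * (n : ℝ)) ^ (-((1 - ρ₀) * (1 - δ₀) ^ 2 / ρ₀))
                    * Real.log (2 * (n : ℝ)) ^ (((1 - ρ₀) * (1 - δ₀) / ρ₀ - 1) / 2)) := by
  obtain ⟨C, hC, hbound⟩ := exists_integral_cdf_gaussianReal_pow_le (Set.Ioo_subset_Ico_self hδ) hρ
  refine ⟨C, hC, fun Ω _ _ n hn X R hX hR ↦ ?_⟩
  have hcomparison := hX.measureReal_iSup_abs_le (Set.Ioo_subset_Ico_self hρ) hR
    (δ₀ * √(2 * (1 - ρ₀) * log (2 * n)))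
  have hintegral := hbound (2 * n) (by lia)
  push_cast at hintegral
  rw [← ofReal_measureReal]
  exact ENNReal.ofReal_le_ofReal (hcomparison.trans hintegral)
end

section
/- Fix constants δ₀, ρ₀ ∈ (0,1) and set α₀ = (1−ρ₀)(1−δ₀)²/ρ₀ and β₀ = (1−ρ₀)(1−δ₀)/ρ₀. Then there exists a constant C > 0 depending only on (δ₀, ρ₀) such that for every n ≥ 2 and every centered Gaussian vector X = (X_1,…,X_n) with var(X_i) = 1 for all i and correlation matrix R satisfying R_{ij} ∈ [0, ρ₀] for all i ≠ j, one has P(max_{1≤i≤n} |X_i| ≤ δ₀ √(2(1−ρ₀)log n)) ≤ C² · n^{−2α₀} · (log n)^{β₀−1}. -/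
open MeasureTheory ProbabilityTheory Real

/-!
Slepian's comparison, proved by differentiating along the Gaussian rotation between the two vectors
and integrating by parts, bounds the orthant probability of `X` by that of the equicorrelated vector
`√ρ₀ * Z + √(1 - ρ₀) * ξ i`. When the correlations are nonnegative, `(X, -X)` has smaller
off-diagonal covariances than two independent copies of that vector, so the two-sided probability
is at most the square of the one-sided one; this is why the same `C` appears squared.

Conditionally on the common factor `Z`, the orthant probability is the `n`-th power of a Gaussian
distribution function. With `u = √(2 * log n)` this power is negligible until the argument reaches
`u - log u / u`, so the integral over `Z` concentrates, at scale `1 / u`, around the value of `Z`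
that puts it there; the Gaussian density at that value yields both exponents.
-/

section GaussianIntegrationByParts

lemma hasDerivAt_gaussianPDFReal (m : ℝ) (v : NNReal) (x : ℝ) :
    HasDerivAt (gaussianPDFReal m v) (-((x - m) / v) * gaussianPDFReal m v x) x := by
  have exponent : HasDerivAt (fun y : ℝ ↦ -(y - m) ^ 2 / (2 * v)) (-((x - m) / v)) x := by
    refine ((((hasDerivAt_id x).sub_const m).pow 2).neg.div_const (2 * (v : ℝ))).congr_deriv ?_
    simp only [id_eq, Nat.cast_ofNat, Nat.add_one_sub_one, pow_one, mul_one]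
    rw [← mul_neg, mul_div_mul_left _ _ two_ne_zero, neg_div]
  rw [gaussianPDFReal_def]
  exact (exponent.exp.const_mul _).congr_deriv (by ring)

lemma integrable_sub_mul_gaussianPDFReal (m : ℝ) {v : NNReal} (hv : v ≠ 0) :
    Integrable (fun x ↦ (x - m) * gaussianPDFReal m v x) := by
  have h : Integrable (fun x ↦ x - m) (gaussianReal m v) :=
    ((memLp_id_gaussianReal 1).integrable le_rfl).sub (integrable_const m)
  rw [gaussianReal_of_var_ne_zero _ hv, integrable_withDensity_iff_integrable_smul'
    (measurable_gaussianPDF _ _) (ae_of_all _ fun _ ↦ gaussianPDF_lt_top)] at h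
  simpa only [toReal_gaussianPDF, smul_eq_mul, mul_comm] using h

theorem integral_sub_mul_gaussianReal {φ φ' : ℝ → ℝ} {K K' : ℝ}
    (hφ : ∀ x, HasDerivAt φ (φ' x) x) (hφ' : Measurable φ') (hK : ∀ x, |φ x| ≤ K)
    (hK' : ∀ x, |φ' x| ≤ K') (m : ℝ) (v : NNReal) :
    ∫ x, (x - m) * φ x ∂gaussianReal m v = v * ∫ x, φ' x ∂gaussianReal m v := by
  rcases eq_or_ne v 0 with rfl | hv
  · simp
  have hφ_meas : AEStronglyMeasurable φ := Continuous.aestronglyMeasurable <|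
    continuous_iff_continuousAt.2 fun x ↦ (hφ x).continuousAt
  have hv' : (v : ℝ) ≠ 0 := by exact_mod_cast hv
  have density_deriv (x : ℝ) :
      HasDerivAt (fun x ↦ v * gaussianPDFReal m v x) (-((x - m) * gaussianPDFReal m v x)) x :=
    ((hasDerivAt_gaussianPDFReal m v x).const_mul _).congr_deriv (by field_simp)
  have density_integrable := (integrable_gaussianPDFReal m v).const_mul (v : ℝ)
  have by_parts := integral_mul_deriv_eq_deriv_mul_of_integrable
    (fun x _ ↦ hφ x) (fun x _ ↦ density_deriv x)
    ((integrable_sub_mul_gaussianPDFReal m hv).neg.bdd_mul hφ_meas (ae_of_all _ hK))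
    (density_integrable.bdd_mul hφ'.aestronglyMeasurable (ae_of_all _ hK'))
    (density_integrable.bdd_mul hφ_meas (ae_of_all _ hK))
  simp only [integral_gaussianReal_eq_integral_smul hv, smul_eq_mul, ← integral_const_mul]
  calc ∫ x, gaussianPDFReal m v x * ((x - m) * φ x)
      = -∫ x, φ x * -((x - m) * gaussianPDFReal m v x) := by
        rw [← integral_neg]; congr with x; ring
    _ = ∫ x, v * (gaussianPDFReal m v x * φ' x) := by
        rw [by_parts, neg_neg]; congr with x; ring

/-- The function `f` on `ℝ^ι` is bounded and continuously differentiable with bounded partial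
derivatives `f' i`: the test functions for Gaussian integration by parts. -/
structure HasBoundedPartials {ι : Type*} [Fintype ι] (f : (ι → ℝ) → ℝ)
    (f' : ι → (ι → ℝ) → ℝ) : Prop where
  hasFDerivAt : ∀ x, HasFDerivAt f (∑ i, f' i x • ContinuousLinearMap.proj (R := ℝ) i) x
  continuous_partial : ∀ i, Continuous (f' i)
  bounded : ∃ K, ∀ x, |f x| ≤ K
  bounded_partial : ∀ i, ∃ K, ∀ x, |f' i x| ≤ K

namespace HasBoundedPartials

variable {ι : Type*} [Fintype ι] {f : (ι → ℝ) → ℝ} {f' : ι → (ι → ℝ) → ℝ}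

lemma continuous (hf : HasBoundedPartials f f') : Continuous f :=
  continuous_iff_continuousAt.2 fun x ↦ (hf.hasFDerivAt x).continuousAt

lemma hasDerivAt_comp (hf : HasBoundedPartials f f') {z : ℝ → ι → ℝ} {z' : ι → ℝ} {s : ℝ}
    (hz : HasDerivAt z z' s) :
    HasDerivAt (fun s ↦ f (z s)) (∑ i, z' i * f' i (z s)) s :=
  ((hf.hasFDerivAt (z s)).comp_hasDerivAt s hz).congr_deriv (by simp [mul_comm])

lemma prod [DecidableEq ι] {φ φ' : ι → ℝ → ℝ} (hφ : ∀ i x, HasDerivAt (φ i) (φ' i x) x)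
    (hφ' : ∀ i, Continuous (φ' i)) (hK : ∀ i, ∃ K, ∀ x, |φ i x| ≤ K)
    (hK' : ∀ i, ∃ K, ∀ x, |φ' i x| ≤ K) :
    HasBoundedPartials (fun x ↦ ∏ i, φ i (x i))
      (fun i x ↦ ∏ j, Function.update φ i (φ' i) j (x j)) := by
  have bounded_prod {ψ : ι → ℝ → ℝ} (hψ : ∀ i, ∃ K, ∀ x, |ψ i x| ≤ K) :
      ∃ K, ∀ x : ι → ℝ, |∏ i, ψ i (x i)| ≤ K := by
    choose K hK using hψ
    refine ⟨∏ i, K i, fun x ↦ ?_⟩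
    rw [Finset.abs_prod]
    exact Finset.prod_le_prod (fun _ _ ↦ abs_nonneg _) fun i _ ↦ hK i (x i)
  have hφ_cont (i) : Continuous (φ i) :=
    continuous_iff_continuousAt.2 fun x ↦ (hφ i x).continuousAt
  refine ⟨fun x ↦ ?_, fun i ↦ ?_, bounded_prod hK, fun i ↦ bounded_prod fun j ↦ ?_⟩
  · have coord (i : ι) : HasFDerivAt (fun x : ι → ℝ ↦ φ i (x i))
        (φ' i (x i) • ContinuousLinearMap.proj (R := ℝ) i) x :=
      (hφ i (x i)).comp_hasFDerivAt x (hasFDerivAt_apply i x)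
    refine (HasFDerivAt.finsetProd fun i _ ↦ coord i).congr_fderiv
      (Finset.sum_congr rfl fun i _ ↦ ?_)
    rw [smul_smul, ← Finset.prod_erase_mul _ _ (Finset.mem_univ i), Function.update_self]
    congr 2
    exact Finset.prod_congr rfl fun j hj ↦ by rw [Function.update_of_ne (Finset.ne_of_mem_erase hj)]
  · refine continuous_finsetProd _ fun j _ ↦ Continuous.comp ?_ (continuous_apply j)
    exact Function.forall_update_iff φ (fun _ ψ ↦ Continuous ψ) |>.2 ⟨hφ' i, fun _ _ ↦ hφ_cont _⟩ j
  · exact Function.forall_update_iff φ (fun _ ψ ↦ ∃ K, ∀ x, |ψ x| ≤ K) |>.2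
      ⟨hK' i, fun _ _ ↦ hK _⟩ j

lemma integrable_comp {Ω : Type*} [MeasurableSpace Ω] {P : Measure Ω} [IsFiniteMeasure P]
    (hf : HasBoundedPartials f f') {Z : Ω → ι → ℝ} (hZ : AEMeasurable Z P) :
    Integrable (fun ω ↦ f (Z ω)) P := by
  obtain ⟨K, hK⟩ := hf.bounded
  exact .of_bound (hf.continuous.comp_aestronglyMeasurable hZ.aestronglyMeasurable) K
    (ae_of_all _ fun ω ↦ hK (Z ω))

lemma integrable_partial_comp {Ω : Type*} [MeasurableSpace Ω] {P : Measure Ω} [IsFiniteMeasure P]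
    (hf : HasBoundedPartials f f') {Z : Ω → ι → ℝ} (hZ : AEMeasurable Z P) (i : ι) :
    Integrable (fun ω ↦ f' i (Z ω)) P := by
  obtain ⟨K, hK⟩ := hf.bounded_partial i
  exact .of_bound ((hf.continuous_partial i).comp_aestronglyMeasurable hZ.aestronglyMeasurable) K
    (ae_of_all _ fun ω ↦ hK (Z ω))

end HasBoundedPartials

lemma covariance_div_variance_mul_variance {Ω : Type*} [MeasurableSpace Ω] {P : Measure Ω}
    [IsProbabilityMeasure P] {W : Ω → ℝ} (hW : MemLp W 2 P) (Z : Ω → ℝ) :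
    cov[W, Z; P] / Var[W; P] * Var[W; P] = cov[W, Z; P] := by
  refine div_mul_cancel_of_imp fun h ↦ ?_
  have deviation_ae_zero : ∀ᵐ ω ∂P, W ω - P[W] = 0 := by
    filter_upwards [ae_eq_integral_of_variance_eq_zero hW h] with ω hω using sub_eq_zero.2 hω
  refine integral_eq_zero_of_ae ?_
  filter_upwards [deviation_ae_zero] with ω hω
  simp [hω]

section

variable {Ω ι : Type*} [MeasurableSpace Ω] {P : Measure Ω} {W : Ω → ℝ} {Z : ι → Ω → ℝ}

-- The residual is jointly Gaussian with, and uncorrelated to, `W`.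
lemma indepFun_regressionResidual [Finite ι]
    (h : HasGaussianLaw (fun ω ↦ (W ω, fun i ↦ Z i ω)) P) :
    IndepFun (fun ω i ↦ Z i ω - cov[W, Z i; P] / Var[W; P] * W ω) W P := by
  have := Fintype.ofFinite ι
  have := h.isProbabilityMeasure
  have hW : MemLp W 2 P := h.fst.memLp_two
  have hZ (i : ι) : MemLp (Z i) 2 P := (h.snd.eval i).memLp_two
  set b : ι → ℝ := fun i ↦ cov[W, Z i; P] / Var[W; P]
  let residualMap : ℝ × (ι → ℝ) →L[ℝ] (ι → ℝ) × (Unit → ℝ) :=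
    (ContinuousLinearMap.pi fun i ↦ .proj i ∘L .snd ℝ _ _ - b i • .fst ℝ _ _).prod
      (ContinuousLinearMap.pi fun _ ↦ .fst ℝ _ _)
  have indep := (h.map_fun residualMap).indepFun_of_covariance_eval
    (X := fun i ω ↦ Z i ω - b i * W ω) (Y := fun _ ↦ W) fun i _ ↦ by
      rw [covariance_fun_sub_left (hZ i) (hW.const_mul _) hW, covariance_const_mul_left,
        covariance_self hW.aemeasurable, covariance_div_variance_mul_variance hW,
        covariance_comm, sub_self]
  exact indep.comp measurable_id (measurable_pi_apply ())

variable [Fintype ι] {f : (ι → ℝ) → ℝ} {f' : ι → (ι → ℝ) → ℝ}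

lemma integral_id_mul_comp_add_smul_gaussianReal (hf : HasBoundedPartials f f') (x b : ι → ℝ)
    (v : NNReal) :
    ∫ w, w * f (x + w • b) ∂gaussianReal 0 v
      = v * ∫ w, ∑ i, b i * f' i (x + w • b) ∂gaussianReal 0 v := by
  obtain ⟨K, hK⟩ := hf.bounded
  choose K' hK' using hf.bounded_partial
  have line_deriv (w : ℝ) : HasDerivAt (fun w ↦ x + w • b) b w := by
    simpa using ((hasDerivAt_id w).smul_const b).const_add x
  have partials_cont := hf.continuous_partial
  have partials_bound (w : ℝ) : |∑ i, b i * f' i (x + w • b)| ≤ ∑ i, |b i| * K' i := by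
    refine (Finset.abs_sum_le_sum_abs _ _).trans (Finset.sum_le_sum fun i _ ↦ ?_)
    rw [abs_mul]
    exact mul_le_mul_of_nonneg_left (hK' i _) (abs_nonneg _)
  simpa using integral_sub_mul_gaussianReal (fun w ↦ hf.hasDerivAt_comp (line_deriv w))
    (by fun_prop) (fun w ↦ hK _) partials_bound 0 v

lemma integral_mul_comp_add_smul_of_indepFun [IsProbabilityMeasure P]
    (hf : HasBoundedPartials f f') {v : NNReal} (hW : HasLaw W (gaussianReal 0 v) P)
    {V : Ω → ι → ℝ} (hV : AEMeasurable V P) (hVW : IndepFun V W P) (b : ι → ℝ) :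
    ∫ ω, W ω * f (V ω + W ω • b) ∂P = v * ∑ i, b i * ∫ ω, f' i (V ω + W ω • b) ∂P := by
  have joint_law : P.map (fun ω ↦ (V ω, W ω)) = (P.map V).prod (gaussianReal 0 v) := by
    rw [(indepFun_iff_map_prod_eq_prod_map_map hV hW.aemeasurable).1 hVW, hW.map_eq]
  have := Measure.isProbabilityMeasure_map hV
  have hVW_meas : AEMeasurable (fun ω ↦ (V ω, W ω)) P := hV.prodMk hW.aemeasurable
  have f_cont := hf.continuous
  have partials_cont := hf.continuous_partial
  have transfer {g : (ι → ℝ) × ℝ → ℝ} (hg : Continuous g)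
      (hint : Integrable (fun ω ↦ g (V ω, W ω)) P) :
      ∫ ω, g (V ω, W ω) ∂P = ∫ x, ∫ w, g (x, w) ∂gaussianReal 0 v ∂P.map V := by
    rw [← integral_map hVW_meas hg.aestronglyMeasurable, joint_law, integral_prod]
    rw [← joint_law]
    exact (integrable_map_measure hg.aestronglyMeasurable hVW_meas).2 hint
  have hsum : AEMeasurable (fun ω ↦ V ω + W ω • b) P := hV.add (hW.aemeasurable.smul_const b)
  have partial_integrable (i : ι) := (hf.integrable_partial_comp hsum i).const_mul (b i)
  obtain ⟨K, hK⟩ := hf.bounded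
  have W_integrable : Integrable W P := by
    have := (memLp_id_gaussianReal (μ := 0) (v := v) 1).integrable le_rfl
    rw [← hW.map_eq] at this
    exact this.comp_aemeasurable hW.aemeasurable
  calc ∫ ω, W ω * f (V ω + W ω • b) ∂P
      = ∫ x, ∫ w, w * f (x + w • b) ∂gaussianReal 0 v ∂P.map V :=
        transfer (g := fun p ↦ p.2 * f (p.1 + p.2 • b)) (by fun_prop) <| W_integrable.mul_bdd
          (hf.integrable_comp hsum).aestronglyMeasurable (ae_of_all _ fun ω ↦ hK _)
    _ = v * ∫ ω, ∑ i, b i * f' i (V ω + W ω • b) ∂P := by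
        simp only [integral_id_mul_comp_add_smul_gaussianReal hf, integral_const_mul]
        rw [← transfer (g := fun p ↦ ∑ i, b i * f' i (p.1 + p.2 • b)) (by fun_prop)
          (integrable_finsetSum _ fun i _ ↦ partial_integrable i)]
    _ = v * ∑ i, b i * ∫ ω, f' i (V ω + W ω • b) ∂P := by
        rw [integral_finsetSum _ fun i _ ↦ partial_integrable i]
        simp only [integral_const_mul]

theorem integral_mul_comp_eq_sum_covariance_mul
    (h : HasGaussianLaw (fun ω ↦ (W ω, fun i ↦ Z i ω)) P) (hW : P[W] = 0)
    (hf : HasBoundedPartials f f') :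
    ∫ ω, W ω * f (fun i ↦ Z i ω) ∂P
      = ∑ i, cov[W, Z i; P] * ∫ ω, f' i (fun j ↦ Z j ω) ∂P := by
  have := h.isProbabilityMeasure
  set b : ι → ℝ := fun i ↦ cov[W, Z i; P] / Var[W; P] with hb
  set V : Ω → ι → ℝ := fun ω i ↦ Z i ω - b i * W ω
  have hV : AEMeasurable V P := aemeasurable_pi_lambda _ fun i ↦
    (h.snd.eval i).aemeasurable.sub (h.fst.aemeasurable.const_mul _)
  have decomposition (ω : Ω) : (fun i ↦ Z i ω) = V ω + W ω • b := by
    ext i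
    simp [V, mul_comm]
  have law_W : HasLaw W (gaussianReal 0 Var[W; P].toNNReal) P :=
    ⟨h.fst.aemeasurable, by rw [h.fst.map_eq_gaussianReal, hW]⟩
  simp only [decomposition]
  rw [integral_mul_comp_add_smul_of_indepFun hf law_W hV (indepFun_regressionResidual h) b,
    Real.coe_toNNReal _ (variance_nonneg _ _), Finset.mul_sum]
  refine Finset.sum_congr rfl fun i _ ↦ ?_
  rw [← mul_assoc, hb, mul_comm Var[W; P],
    covariance_div_variance_mul_variance h.fst.memLp_two]

end

end GaussianIntegrationByParts

section SlepianComparison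

/-- The point at angle `θ` of the path from the random vector `X` to the random vector `Y` along
which Slepian's inequality interpolates. For independent centered Gaussian `X` and `Y`, its
velocity `gaussianRotation X Y (θ + π / 2)` is again Gaussian. -/
noncomputable def gaussianRotation {Ω ι : Type*} (X Y : ι → Ω → ℝ) (θ : ℝ) (i : ι) (ω : Ω) : ℝ :=
  cos θ * X i ω + sin θ * Y i ω

lemma hasDerivAt_gaussianRotation {Ω ι : Type*} (X Y : ι → Ω → ℝ) (i : ι) (ω : Ω) (θ : ℝ) :
    HasDerivAt (fun θ ↦ gaussianRotation X Y θ i ω) (gaussianRotation X Y (θ + π / 2) i ω) θ := by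
  simpa only [gaussianRotation, cos_add_pi_div_two, sin_add_pi_div_two] using
    ((hasDerivAt_cos θ).mul_const (X i ω)).fun_add ((hasDerivAt_sin θ).mul_const (Y i ω))

lemma abs_gaussianRotation_le {Ω ι : Type*} (X Y : ι → Ω → ℝ) (i : ι) (ω : Ω) (θ : ℝ) :
    |gaussianRotation X Y θ i ω| ≤ |X i ω| + |Y i ω| := by
  refine (abs_add_le _ _).trans (add_le_add ?_ ?_) <;> rw [abs_mul]
  · exact mul_le_of_le_one_left (abs_nonneg _) (abs_cos_le_one θ)
  · exact mul_le_of_le_one_left (abs_nonneg _) (abs_sin_le_one θ)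

section Interpolation

variable {Ω ι : Type*} [MeasurableSpace Ω] {P : Measure Ω} {X Y : ι → Ω → ℝ}

lemma covariance_gaussianRotation [IsFiniteMeasure P] (hX : ∀ i, MemLp (X i) 2 P)
    (hY : ∀ i, MemLp (Y i) 2 P) (hXY : ∀ i j, cov[X i, Y j; P] = 0) (α β : ℝ) (i j : ι) :
    cov[gaussianRotation X Y α i, gaussianRotation X Y β j; P]
      = cos α * cos β * cov[X i, X j; P] + sin α * sin β * cov[Y i, Y j; P] := by
  have hX' (i : ι) (c : ℝ) := (hX i).const_mul c
  have hY' (i : ι) (c : ℝ) := (hY i).const_mul c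
  change cov[(fun ω ↦ cos α * X i ω) + fun ω ↦ sin α * Y i ω,
    (fun ω ↦ cos β * X j ω) + fun ω ↦ sin β * Y j ω; P] = _
  rw [covariance_add_left (hX' _ _) (hY' _ _) ((hX' _ _).add (hY' _ _)),
    covariance_add_right (hX' _ _) (hX' _ _) (hY' _ _),
    covariance_add_right (hY' _ _) (hX' _ _) (hY' _ _)]
  simp only [covariance_const_mul_left, covariance_const_mul_right, hXY, covariance_comm (Y i)]
  ring

lemma hasGaussianLaw_gaussianRotation_prodMk [Finite ι]
    (h : HasGaussianLaw (fun ω ↦ ((fun i ↦ X i ω), fun i ↦ Y i ω)) P) (α β : ℝ) (i : ι) :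
    HasGaussianLaw
      (fun ω ↦ (gaussianRotation X Y α i ω, fun j ↦ gaussianRotation X Y β j ω)) P := by
  have := Fintype.ofFinite ι
  let fstVec := ContinuousLinearMap.fst ℝ (ι → ℝ) (ι → ℝ)
  let sndVec := ContinuousLinearMap.snd ℝ (ι → ℝ) (ι → ℝ)
  exact h.map_fun ((.proj i ∘L (cos α • fstVec + sin α • sndVec)).prod
    (cos β • fstVec + sin β • sndVec))

variable [Fintype ι]

lemma hasDerivAt_integral_comp_gaussianRotation [IsFiniteMeasure P]
    (hX : ∀ i, Integrable (X i) P) (hY : ∀ i, Integrable (Y i) P)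
    {f : (ι → ℝ) → ℝ} {f' : ι → (ι → ℝ) → ℝ} (hf : HasBoundedPartials f f') (θ : ℝ) :
    HasDerivAt (fun θ ↦ ∫ ω, f (fun i ↦ gaussianRotation X Y θ i ω) ∂P)
      (∑ i, ∫ ω, gaussianRotation X Y (θ + π / 2) i ω
        * f' i (fun j ↦ gaussianRotation X Y θ j ω) ∂P) θ := by
  have rotation_integrable (θ : ℝ) (i : ι) : Integrable (gaussianRotation X Y θ i) P :=
    ((hX i).const_mul _).add ((hY i).const_mul _)
  have rotation_meas (θ : ℝ) : AEMeasurable (fun ω i ↦ gaussianRotation X Y θ i ω) P :=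
    aemeasurable_pi_lambda _ fun i ↦ (rotation_integrable θ i).aemeasurable
  choose K hK using hf.bounded_partial
  have term_integrable (i : ι) : Integrable (fun ω ↦ gaussianRotation X Y (θ + π / 2) i ω
      * f' i (fun j ↦ gaussianRotation X Y θ j ω)) P :=
    (rotation_integrable _ i).mul_bdd
      (hf.integrable_partial_comp (rotation_meas θ) i).aestronglyMeasurable
      (ae_of_all _ fun ω ↦ hK i _)
  have term_bound (ω : Ω) (θ : ℝ) :
      ‖∑ i, gaussianRotation X Y (θ + π / 2) i ω * f' i (fun j ↦ gaussianRotation X Y θ j ω)‖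
        ≤ ∑ i, (|X i ω| + |Y i ω|) * K i := by
    refine norm_sum_le_of_le _ fun i _ ↦ ?_
    rw [norm_mul]
    exact mul_le_mul (abs_gaussianRotation_le X Y i ω _) (hK i _) (norm_nonneg _) (by positivity)
  rw [← integral_finsetSum _ fun i _ ↦ term_integrable i]
  exact (hasDerivAt_integral_of_dominated_loc_of_deriv_le (s := Set.univ)
    (bound := fun ω ↦ ∑ i, (|X i ω| + |Y i ω|) * K i) Filter.univ_mem
    (.of_forall fun θ ↦ (hf.integrable_comp (rotation_meas θ)).aestronglyMeasurable)
    (hf.integrable_comp (rotation_meas θ))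
    (integrable_finsetSum _ fun i _ ↦ term_integrable i).aestronglyMeasurable
    (ae_of_all _ fun ω θ _ ↦ term_bound ω θ)
    (integrable_finsetSum _ fun i _ ↦ ((hX i).abs.add (hY i).abs).mul_const _)
    (ae_of_all _ fun ω θ _ ↦ hf.hasDerivAt_comp
      (hasDerivAt_pi.2 fun i ↦ hasDerivAt_gaussianRotation X Y i ω θ))).2

theorem hasDerivAt_integral_comp_gaussianRotation_of_uncorrelated
    (h : HasGaussianLaw (fun ω ↦ ((fun i ↦ X i ω), fun i ↦ Y i ω)) P)
    (hX : ∀ i, P[X i] = 0) (hY : ∀ i, P[Y i] = 0) (hXY : ∀ i j, cov[X i, Y j; P] = 0)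
    {f : (ι → ℝ) → ℝ} {f' : ι → (ι → ℝ) → ℝ} {f'' : ι → ι → (ι → ℝ) → ℝ}
    (hf : HasBoundedPartials f f') (hf' : ∀ i, HasBoundedPartials (f' i) (f'' i)) (θ : ℝ) :
    HasDerivAt (fun θ ↦ ∫ ω, f (fun i ↦ gaussianRotation X Y θ i ω) ∂P)
      (∑ i, ∑ j, sin θ * cos θ * (cov[Y i, Y j; P] - cov[X i, X j; P])
        * ∫ ω, f'' i j (fun k ↦ gaussianRotation X Y θ k ω) ∂P) θ := by
  have := h.isProbabilityMeasure
  have hX_lp (i : ι) : MemLp (X i) 2 P := (h.fst.eval i).memLp_two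
  have hY_lp (i : ι) : MemLp (Y i) 2 P := (h.snd.eval i).memLp_two
  have hX_int (i : ι) : Integrable (X i) P := (h.fst.eval i).integrable
  have hY_int (i : ι) : Integrable (Y i) P := (h.snd.eval i).integrable
  have velocity_centered (i : ι) : P[gaussianRotation X Y (θ + π / 2) i] = 0 := by
    unfold gaussianRotation
    rw [integral_add ((hX_int i).const_mul _) ((hY_int i).const_mul _), integral_const_mul,
      integral_const_mul, hX, hY, mul_zero, mul_zero, add_zero]
  refine (hasDerivAt_integral_comp_gaussianRotation hX_int hY_int hf θ).congr_deriv
    (Finset.sum_congr rfl fun i _ ↦ ?_)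
  rw [integral_mul_comp_eq_sum_covariance_mul
    (hasGaussianLaw_gaussianRotation_prodMk h _ θ i) (velocity_centered i) (hf' i)]
  refine Finset.sum_congr rfl fun j _ ↦ ?_
  rw [covariance_gaussianRotation hX_lp hY_lp hXY, cos_add_pi_div_two, sin_add_pi_div_two]
  ring

theorem integral_comp_le_of_covariance_le_of_uncorrelated
    (h : HasGaussianLaw (fun ω ↦ ((fun i ↦ X i ω), fun i ↦ Y i ω)) P)
    (hX : ∀ i, P[X i] = 0) (hY : ∀ i, P[Y i] = 0) (hXY : ∀ i j, cov[X i, Y j; P] = 0)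
    (hvar : ∀ i, Var[X i; P] = Var[Y i; P])
    (hcov : ∀ i j, i ≠ j → cov[X i, X j; P] ≤ cov[Y i, Y j; P])
    {f : (ι → ℝ) → ℝ} {f' : ι → (ι → ℝ) → ℝ} {f'' : ι → ι → (ι → ℝ) → ℝ}
    (hf : HasBoundedPartials f f') (hf' : ∀ i, HasBoundedPartials (f' i) (f'' i))
    (hf'' : ∀ i j, i ≠ j → ∀ x, 0 ≤ f'' i j x) :
    ∫ ω, f (fun i ↦ X i ω) ∂P ≤ ∫ ω, f (fun i ↦ Y i ω) ∂P := by
  have hderiv := hasDerivAt_integral_comp_gaussianRotation_of_uncorrelated h hX hY hXY hf hf'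
  have monotone : MonotoneOn (fun θ ↦ ∫ ω, f (fun i ↦ gaussianRotation X Y θ i ω) ∂P)
      (Set.Icc 0 (π / 2)) := by
    refine monotoneOn_of_hasDerivWithinAt_nonneg (convex_Icc _ _)
      (fun θ _ ↦ (hderiv θ).continuousAt.continuousWithinAt)
      (fun θ _ ↦ (hderiv θ).hasDerivWithinAt) fun θ hθ ↦ ?_
    rw [interior_Icc, Set.mem_Ioo] at hθ
    have hsin : 0 ≤ sin θ := sin_nonneg_of_nonneg_of_le_pi hθ.1.le (by linarith [pi_pos])
    have hcos : 0 ≤ cos θ := cos_nonneg_of_neg_pi_div_two_le_of_le (by linarith) hθ.2.le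
    refine Finset.sum_nonneg fun i _ ↦ Finset.sum_nonneg fun j _ ↦ ?_
    rcases eq_or_ne i j with rfl | hij
    · rw [covariance_self (h.fst.eval i).aemeasurable, covariance_self (h.snd.eval i).aemeasurable,
        hvar, sub_self, mul_zero, zero_mul]
    · exact mul_nonneg (mul_nonneg (mul_nonneg hsin hcos) (sub_nonneg.2 (hcov i j hij)))
        (integral_nonneg fun ω ↦ hf'' i j hij _)
  simpa [gaussianRotation] using monotone (Set.left_mem_Icc.2 (by positivity))
    (Set.right_mem_Icc.2 (by positivity)) (by positivity : 0 ≤ π / 2)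

end Interpolation

/-- The real family `X` is jointly Gaussian under `P` and all its members have mean zero; the
covariances are left unspecified. -/
structure HasCenteredGaussianLaw {Ω ι : Type*} [MeasurableSpace Ω] [Fintype ι]
    (X : ι → Ω → ℝ) (P : Measure Ω) : Prop where
  hasGaussianLaw : HasGaussianLaw (fun ω i ↦ X i ω) P
  integral_eq_zero : ∀ i, P[X i] = 0

namespace HasCenteredGaussianLaw

variable {Ω Ω' ι : Type*} [MeasurableSpace Ω] [MeasurableSpace Ω'] [Fintype ι]
  {X : ι → Ω → ℝ} {μ : Measure Ω} {P : Measure Ω'}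

lemma isProbabilityMeasure (hX : HasCenteredGaussianLaw X μ) : IsProbabilityMeasure μ :=
  hX.hasGaussianLaw.isProbabilityMeasure

lemma aemeasurable (hX : HasCenteredGaussianLaw X μ) (i : ι) : AEMeasurable (X i) μ :=
  (hX.hasGaussianLaw.eval i).aemeasurable

lemma memLp_two (hX : HasCenteredGaussianLaw X μ) (i : ι) : MemLp (X i) 2 μ :=
  (hX.hasGaussianLaw.eval i).memLp_two

lemma comp_hasLaw (hX : HasCenteredGaussianLaw X μ) {T : Ω' → Ω} (hT : HasLaw T μ P) :
    HasCenteredGaussianLaw (fun i ω ↦ X i (T ω)) P where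
  hasGaussianLaw :=
    have := hX.hasGaussianLaw.isGaussian_map
    (HasLaw.fun_comp (Y := fun ω i ↦ X i ω) ⟨hX.hasGaussianLaw.aemeasurable, rfl⟩
      hT).hasGaussianLaw
  integral_eq_zero i :=
    (hT.integral_comp (hX.aemeasurable i).aestronglyMeasurable).trans (hX.integral_eq_zero i)

end HasCenteredGaussianLaw

section

variable {Ω Ω' ι : Type*} [MeasurableSpace Ω] [MeasurableSpace Ω'] [Fintype ι]
  {μ : Measure Ω} {ν : Measure Ω'} {X : ι → Ω → ℝ} {Y : ι → Ω' → ℝ}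

theorem integral_comp_le_of_covariance_le
    (hX : HasCenteredGaussianLaw X μ) (hY : HasCenteredGaussianLaw Y ν)
    (hvar : ∀ i, Var[X i; μ] = Var[Y i; ν])
    (hcov : ∀ i j, i ≠ j → cov[X i, X j; μ] ≤ cov[Y i, Y j; ν])
    {f : (ι → ℝ) → ℝ} {f' : ι → (ι → ℝ) → ℝ} {f'' : ι → ι → (ι → ℝ) → ℝ}
    (hf : HasBoundedPartials f f') (hf' : ∀ i, HasBoundedPartials (f' i) (f'' i))
    (hf'' : ∀ i j, i ≠ j → ∀ x, 0 ≤ f'' i j x) :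
    ∫ ω, f (fun i ↦ X i ω) ∂μ ≤ ∫ ω, f (fun i ↦ Y i ω) ∂ν := by
  have := hX.isProbabilityMeasure
  have := hY.isProbabilityMeasure
  have fst_pres : MeasurePreserving Prod.fst (μ.prod ν) μ := measurePreserving_fst
  have snd_pres : MeasurePreserving Prod.snd (μ.prod ν) ν := measurePreserving_snd
  have hX' := hX.comp_hasLaw fst_pres.hasLaw
  have hY' := hY.comp_hasLaw snd_pres.hasLaw
  have joint := IndepFun.hasGaussianLaw hX'.hasGaussianLaw hY'.hasGaussianLaw <|
    indepFun_prod₀ hX.hasGaussianLaw.aemeasurable hY.hasGaussianLaw.aemeasurable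
  have comparison := integral_comp_le_of_covariance_le_of_uncorrelated joint
    hX'.integral_eq_zero hY'.integral_eq_zero
    (fun i j ↦ covariance_fst_snd_prod (hX.memLp_two i) (hY.memLp_two j))
    (fun i ↦ by
      rw [fst_pres.variance_fun_comp (hX.aemeasurable i),
        snd_pres.variance_fun_comp (hY.aemeasurable i), hvar])
    (fun i j hij ↦ by
      rw [fst_pres.hasLaw.covariance_fun_comp (hX.aemeasurable i) (hX.aemeasurable j),
        snd_pres.hasLaw.covariance_fun_comp (hY.aemeasurable i) (hY.aemeasurable j)]
      exact hcov i j hij) hf hf' hf''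
  rwa [integral_fun_fst (μ := μ) (ν := ν) fun ω ↦ f fun i ↦ X i ω,
    integral_fun_snd (μ := μ) (ν := ν) fun ω ↦ f fun i ↦ Y i ω, probReal_univ, probReal_univ,
    one_smul, one_smul] at comparison

lemma prod_update_update_nonneg [DecidableEq ι] {φ φ' : ι → ℝ → ℝ} (hφ : ∀ i x, 0 ≤ φ i x)
    (hφ' : ∀ i x, φ' i x ≤ 0) {i j : ι} (hij : i ≠ j) (x : ι → ℝ) :
    0 ≤ ∏ k, Function.update (Function.update φ i (φ' i)) j (φ' j) k (x k) := by
  rw [← Finset.mul_prod_erase _ _ (Finset.mem_univ j),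
    ← Finset.mul_prod_erase _ _ (Finset.mem_erase.2 ⟨hij, Finset.mem_univ i⟩), ← mul_assoc]
  refine mul_nonneg ?_ (Finset.prod_nonneg fun k hk ↦ ?_)
  · rw [Function.update_self, Function.update_of_ne hij, Function.update_self]
    exact mul_nonneg_of_nonpos_of_nonpos (hφ' j _) (hφ' i _)
  · simp only [Finset.mem_erase, Finset.mem_univ, and_true] at hk
    rw [Function.update_of_ne hk.2, Function.update_of_ne hk.1]
    exact hφ k _

theorem integral_prod_le_of_covariance_le
    (hX : HasCenteredGaussianLaw X μ) (hY : HasCenteredGaussianLaw Y ν)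
    (hvar : ∀ i, Var[X i; μ] = Var[Y i; ν])
    (hcov : ∀ i j, i ≠ j → cov[X i, X j; μ] ≤ cov[Y i, Y j; ν])
    {φ φ' φ'' : ι → ℝ → ℝ} (hφ : ∀ i x, HasDerivAt (φ i) (φ' i x) x)
    (hφ' : ∀ i x, HasDerivAt (φ' i) (φ'' i x) x) (hφ'' : ∀ i, Continuous (φ'' i))
    (bound : ∀ i, ∃ K, ∀ x, |φ i x| ≤ K) (bound' : ∀ i, ∃ K, ∀ x, |φ' i x| ≤ K)
    (bound'' : ∀ i, ∃ K, ∀ x, |φ'' i x| ≤ K)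
    (nonneg : ∀ i x, 0 ≤ φ i x) (nonpos : ∀ i x, φ' i x ≤ 0) :
    ∫ ω, ∏ i, φ i (X i ω) ∂μ ≤ ∫ ω, ∏ i, φ i (Y i ω) ∂ν := by
  classical
  have hφ'_cont (i) : Continuous (φ' i) :=
    continuous_iff_continuousAt.2 fun x ↦ (hφ' i x).continuousAt
  have update_deriv (i j : ι) (x : ℝ) : HasDerivAt (Function.update φ i (φ' i) j)
      (Function.update φ' i (φ'' i) j x) x := by
    rcases eq_or_ne j i with rfl | hji
    · simpa using hφ' j x
    · simpa [hji] using hφ j x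
  refine integral_comp_le_of_covariance_le hX hY hvar hcov
    (HasBoundedPartials.prod hφ hφ'_cont bound bound')
    (fun i ↦ HasBoundedPartials.prod (update_deriv i)
      ((Function.forall_update_iff φ' fun _ ψ ↦ Continuous ψ).2 ⟨hφ'' i, fun j _ ↦ hφ'_cont j⟩)
      ((Function.forall_update_iff φ fun _ ψ ↦ ∃ K, ∀ x, |ψ x| ≤ K).2
        ⟨bound' i, fun j _ ↦ bound j⟩)
      ((Function.forall_update_iff φ' fun _ ψ ↦ ∃ K, ∀ x, |ψ x| ≤ K).2
        ⟨bound'' i, fun j _ ↦ bound' j⟩))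
    fun i j hij x ↦ ?_
  simpa only [Function.update_of_ne hij.symm] using prod_update_update_nonneg nonneg nonpos hij x

/-- A smooth approximation, from sigmoids, of the indicator of `Set.Iic t`. The shift by `m` makes
it converge at the threshold `x = t` too. -/
noncomputable def smoothIicIndicator (m : ℕ) (t x : ℝ) : ℝ :=
  sigmoid (m ^ 2 * (t - x) + m)

lemma hasDerivAt_smoothIicIndicator (m : ℕ) (t x : ℝ) :
    HasDerivAt (smoothIicIndicator m t)
      (-m ^ 2 * (smoothIicIndicator m t x * (1 - smoothIicIndicator m t x))) x := by
  have inner : HasDerivAt (fun x : ℝ ↦ (m : ℝ) ^ 2 * (t - x) + m) (-m ^ 2) x := by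
    simpa using (((hasDerivAt_id x).const_sub t).const_mul ((m : ℝ) ^ 2)).add_const (m : ℝ)
  exact ((hasDerivAt_sigmoid _).comp x inner).congr_deriv (mul_comm _ _)

lemma hasDerivAt_deriv_smoothIicIndicator (m : ℕ) (t x : ℝ) :
    HasDerivAt
      (fun x ↦ -(m : ℝ) ^ 2 * (smoothIicIndicator m t x * (1 - smoothIicIndicator m t x)))
      (m ^ 4 * (smoothIicIndicator m t x * (1 - smoothIicIndicator m t x)
        * (1 - 2 * smoothIicIndicator m t x))) x := by
  have h := hasDerivAt_smoothIicIndicator m t x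
  exact ((h.mul (h.const_sub 1)).const_mul (-(m : ℝ) ^ 2)).congr_deriv (by ring)

lemma smoothIicIndicator_mem_Icc (m : ℕ) (t x : ℝ) :
    smoothIicIndicator m t x ∈ Set.Icc (0 : ℝ) 1 :=
  ⟨sigmoid_nonneg _, sigmoid_le_one _⟩

lemma continuous_smoothIicIndicator (m : ℕ) (t : ℝ) : Continuous (smoothIicIndicator m t) :=
  continuous_iff_continuousAt.2 fun x ↦ (hasDerivAt_smoothIicIndicator m t x).continuousAt

lemma tendsto_smoothIicIndicator (t x : ℝ) :
    Filter.Tendsto (fun m ↦ smoothIicIndicator m t x) Filter.atTop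
      (nhds ((Set.Iic t).indicator 1 x)) := by
  have cast_atTop := tendsto_natCast_atTop_atTop (R := ℝ)
  rcases le_or_gt x t with hx | hx
  · rw [Set.indicator_of_mem (Set.mem_Iic.2 hx)]
    refine tendsto_sigmoid_atTop.comp (Filter.tendsto_atTop_mono (fun m ↦ ?_) cast_atTop)
    exact le_add_of_nonneg_left (mul_nonneg (sq_nonneg _) (sub_nonneg.2 hx))
  · rw [Set.indicator_of_notMem (Set.notMem_Iic.2 hx)]
    refine tendsto_sigmoid_atBot.comp ?_
    have slope : Filter.Tendsto (fun m : ℕ ↦ (m : ℝ) * (t - x) + 1) Filter.atTop Filter.atBot :=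
      Filter.tendsto_atBot_add_const_right _ _
        (cast_atTop.atTop_mul_const_of_neg (sub_neg.2 hx))
    refine (cast_atTop.atTop_mul_atBot₀ slope).congr fun m ↦ ?_
    ring

lemma tendsto_integral_prod_smoothIicIndicator [IsProbabilityMeasure μ]
    (hX : ∀ i, AEMeasurable (X i) μ) (t : ι → ℝ) :
    Filter.Tendsto (fun m ↦ ∫ ω, ∏ i, smoothIicIndicator m (t i) (X i ω) ∂μ) Filter.atTop
      (nhds (μ.real {ω | ∀ i, X i ω ≤ t i})) := by
  have event_null : NullMeasurableSet {ω | ∀ i, X i ω ≤ t i} μ := by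
    rw [Set.ofPred_forall]
    exact .iInter fun i ↦ nullMeasurableSet_le (hX i) aemeasurable_const
  have event_integral :
      ∫ ω, {ω | ∀ i, X i ω ≤ t i}.indicator 1 ω ∂μ = μ.real {ω | ∀ i, X i ω ≤ t i} := by
    simp [integral_indicator₀ event_null]
  rw [← event_integral]
  have indicator_eq_prod (ω : Ω) : {ω | ∀ i, X i ω ≤ t i}.indicator (1 : Ω → ℝ) ω
      = ∏ i, (Set.Iic (t i)).indicator 1 (X i ω) := by
    simp [Set.indicator_apply, Finset.prod_boole]
  refine tendsto_integral_of_dominated_convergence (fun _ ↦ 1) (fun m ↦ ?_)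
    (integrable_const _) (fun m ↦ ae_of_all _ fun ω ↦ ?_) (ae_of_all _ fun ω ↦ ?_)
  · exact (Finset.aemeasurable_fun_prod _ fun i _ ↦
      (continuous_smoothIicIndicator m (t i)).measurable.comp_aemeasurable
        (hX i)).aestronglyMeasurable
  · have mem (i : ι) := smoothIicIndicator_mem_Icc m (t i) (X i ω)
    rw [norm_of_nonneg (Finset.prod_nonneg fun i _ ↦ (mem i).1)]
    exact Finset.prod_le_one (fun i _ ↦ (mem i).1) fun i _ ↦ (mem i).2
  · rw [indicator_eq_prod]
    exact tendsto_finsetProd _ fun i _ ↦ tendsto_smoothIicIndicator (t i) (X i ω)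

theorem slepian (hX : HasCenteredGaussianLaw X μ) (hY : HasCenteredGaussianLaw Y ν)
    (hvar : ∀ i, Var[X i; μ] = Var[Y i; ν])
    (hcov : ∀ i j, i ≠ j → cov[X i, X j; μ] ≤ cov[Y i, Y j; ν]) (t : ι → ℝ) :
    μ.real {ω | ∀ i, X i ω ≤ t i} ≤ ν.real {ω | ∀ i, Y i ω ≤ t i} := by
  have := hX.isProbabilityMeasure
  have := hY.isProbabilityMeasure
  refine le_of_tendsto_of_tendsto'
    (tendsto_integral_prod_smoothIicIndicator hX.aemeasurable t)
    (tendsto_integral_prod_smoothIicIndicator hY.aemeasurable t) fun m ↦ ?_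
  have σ_cont (i : ι) := continuous_smoothIicIndicator m (t i)
  have σ_nonneg (i : ι) (x : ℝ) := (smoothIicIndicator_mem_Icc m (t i) x).1
  have σ_le_one (i : ι) (x : ℝ) := (smoothIicIndicator_mem_Icc m (t i) x).2
  have logistic_mem (i : ι) (x : ℝ) :
      smoothIicIndicator m (t i) x * (1 - smoothIicIndicator m (t i) x) ∈ Set.Icc (0 : ℝ) 1 :=
    ⟨mul_nonneg (σ_nonneg i x) (sub_nonneg.2 (σ_le_one i x)),
      mul_le_one₀ (σ_le_one i x) (sub_nonneg.2 (σ_le_one i x)) (sub_le_self _ (σ_nonneg i x))⟩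
  refine integral_prod_le_of_covariance_le hX hY hvar hcov
    (fun i ↦ hasDerivAt_smoothIicIndicator m (t i))
    (fun i ↦ hasDerivAt_deriv_smoothIicIndicator m (t i)) (fun i ↦ by fun_prop)
    (fun i ↦ ⟨1, fun x ↦ ?_⟩) (fun i ↦ ⟨m ^ 2, fun x ↦ ?_⟩) (fun i ↦ ⟨m ^ 4, fun x ↦ ?_⟩)
    σ_nonneg fun i x ↦ ?_
  · exact abs_le.2 ⟨by linarith [σ_nonneg i x], σ_le_one i x⟩
  · rw [abs_mul, abs_neg, abs_of_nonneg (by positivity), abs_of_nonneg (logistic_mem i x).1]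
    exact mul_le_of_le_one_right (by positivity) (logistic_mem i x).2
  · rw [abs_mul, abs_mul, abs_of_nonneg (by positivity : (0 : ℝ) ≤ m ^ 4),
      abs_of_nonneg (logistic_mem i x).1]
    refine mul_le_of_le_one_right (by positivity) (mul_le_one₀ (logistic_mem i x).2
      (abs_nonneg _) (abs_le.2 ⟨?_, ?_⟩)) <;> linarith [σ_nonneg i x, σ_le_one i x]
  · exact mul_nonpos_of_nonpos_of_nonneg (neg_nonpos.2 (by positivity)) (logistic_mem i x).1

end

namespace HasCenteredGaussianLaw

variable {Ω Ω' ι κ : Type*} [MeasurableSpace Ω] [MeasurableSpace Ω'] [Fintype ι] [Fintype κ]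
  {X : ι → Ω → ℝ} {μ : Measure Ω} {Y : κ → Ω' → ℝ} {ν : Measure Ω'}

lemma sumElim {Z : κ → Ω → ℝ}
    (h : HasGaussianLaw (fun ω ↦ ((fun i ↦ X i ω), fun j ↦ Z j ω)) μ)
    (hX : ∀ i, μ[X i] = 0) (hZ : ∀ j, μ[Z j] = 0) :
    HasCenteredGaussianLaw (Sum.elim X Z) μ where
  hasGaussianLaw := by
    let glue : (ι → ℝ) × (κ → ℝ) →L[ℝ] (ι ⊕ κ → ℝ) := .pi <| Sum.elim
      (fun i ↦ .proj i ∘L .fst ℝ _ _) (fun j ↦ .proj j ∘L .snd ℝ _ _)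
    have glue_eq : (fun ω s ↦ Sum.elim X Z s ω)
        = fun ω ↦ glue (fun i ↦ X i ω, fun j ↦ Z j ω) := by
      funext ω s
      cases s <;> rfl
    rw [glue_eq]
    exact h.map_fun glue
  integral_eq_zero := Sum.forall.2 ⟨hX, hZ⟩

lemma sumElim_neg (hX : HasCenteredGaussianLaw X μ) :
    HasCenteredGaussianLaw (Sum.elim X fun i ω ↦ -X i ω) μ :=
  sumElim (hX.hasGaussianLaw.map_fun ((ContinuousLinearMap.id ℝ (ι → ℝ)).prod (-.id ℝ (ι → ℝ))))
    hX.integral_eq_zero fun i ↦ by rw [integral_neg, hX.integral_eq_zero, neg_zero]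

lemma sumElim_prod (hX : HasCenteredGaussianLaw X μ) (hY : HasCenteredGaussianLaw Y ν) :
    HasCenteredGaussianLaw (Sum.elim (fun i p ↦ X i p.1) fun j p ↦ Y j p.2) (μ.prod ν) :=
  have := hX.isProbabilityMeasure
  have := hY.isProbabilityMeasure
  have hX' := hX.comp_hasLaw (P := μ.prod ν) measurePreserving_fst.hasLaw
  have hY' := hY.comp_hasLaw (P := μ.prod ν) measurePreserving_snd.hasLaw
  sumElim (IndepFun.hasGaussianLaw hX'.hasGaussianLaw hY'.hasGaussianLaw <|
      indepFun_prod₀ hX.hasGaussianLaw.aemeasurable hY.hasGaussianLaw.aemeasurable)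
    hX'.integral_eq_zero hY'.integral_eq_zero

end HasCenteredGaussianLaw

variable {Ω Ω' ι : Type*} [MeasurableSpace Ω] [MeasurableSpace Ω'] [Fintype ι]
  {μ : Measure Ω} {ν : Measure Ω'} {X : ι → Ω → ℝ} {Y : ι → Ω' → ℝ}

lemma covariance_sumElim_neg_le_covariance_sumElim_prod
    (hX : HasCenteredGaussianLaw X μ) (hY : HasCenteredGaussianLaw Y ν)
    (hcov : ∀ i j, i ≠ j → cov[X i, X j; μ] ≤ cov[Y i, Y j; ν])
    (hnonneg : ∀ i j, i ≠ j → 0 ≤ cov[X i, X j; μ]) (r s : ι ⊕ ι) (hrs : r ≠ s) :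
    cov[Sum.elim X (fun i ω ↦ -X i ω) r, Sum.elim X (fun i ω ↦ -X i ω) s; μ]
      ≤ cov[Sum.elim (fun i p ↦ Y i p.1) (fun i p ↦ Y i p.2) r,
          Sum.elim (fun i p ↦ Y i p.1) (fun i p ↦ Y i p.2) s; ν.prod ν] := by
  have := hX.isProbabilityMeasure
  have := hY.isProbabilityMeasure
  have fst_law : HasLaw Prod.fst ν (ν.prod ν) := measurePreserving_fst.hasLaw
  have snd_law : HasLaw Prod.snd ν (ν.prod ν) := measurePreserving_snd.hasLaw
  have cov_cross (i j : ι) : cov[fun p ↦ Y i p.1, fun p ↦ Y j p.2; ν.prod ν] = 0 :=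
    covariance_fst_snd_prod (hY.memLp_two i) (hY.memLp_two j)
  have cov_nonneg (i j : ι) : 0 ≤ cov[X i, X j; μ] := by
    rcases eq_or_ne i j with rfl | hij
    · rw [covariance_self (hX.aemeasurable i)]
      exact variance_nonneg _ _
    · exact hnonneg i j hij
  rcases r with i | i <;> rcases s with j | j <;> simp only [Sum.elim_inl, Sum.elim_inr]
  · rw [fst_law.covariance_fun_comp (hY.aemeasurable i) (hY.aemeasurable j)]
    exact hcov i j (by simpa using hrs)
  · rw [cov_cross, covariance_fun_neg_right]
    exact neg_nonpos.2 (cov_nonneg i j)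
  · rw [covariance_comm (fun p : Ω' × Ω' ↦ Y i p.2), cov_cross, covariance_fun_neg_left]
    exact neg_nonpos.2 (cov_nonneg i j)
  · rw [snd_law.covariance_fun_comp (hY.aemeasurable i) (hY.aemeasurable j),
      covariance_fun_neg_left, covariance_fun_neg_right, neg_neg]
    exact hcov i j (by simpa using hrs)

-- `X` and `-X` are nonpositively correlated, so together they are dominated by two independent
-- copies of `Y`.
theorem slepian_abs (hX : HasCenteredGaussianLaw X μ) (hY : HasCenteredGaussianLaw Y ν)
    (hvar : ∀ i, Var[X i; μ] = Var[Y i; ν])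
    (hcov : ∀ i j, i ≠ j → cov[X i, X j; μ] ≤ cov[Y i, Y j; ν])
    (hnonneg : ∀ i j, i ≠ j → 0 ≤ cov[X i, X j; μ]) (t : ι → ℝ) :
    μ.real {ω | ∀ i, |X i ω| ≤ t i} ≤ ν.real {ω | ∀ i, Y i ω ≤ t i} ^ 2 := by
  have := hY.isProbabilityMeasure
  have fst_pres : MeasurePreserving Prod.fst (ν.prod ν) ν := measurePreserving_fst
  have snd_pres : MeasurePreserving Prod.snd (ν.prod ν) ν := measurePreserving_snd
  have hvar' : ∀ s, Var[Sum.elim X (fun i ω ↦ -X i ω) s; μ]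
      = Var[Sum.elim (fun i p ↦ Y i p.1) (fun i p ↦ Y i p.2) s; ν.prod ν] := by
    rintro (i | i)
    · simp only [Sum.elim_inl]
      rw [fst_pres.variance_fun_comp (hY.aemeasurable i), hvar]
    · simp only [Sum.elim_inr]
      rw [snd_pres.variance_fun_comp (hY.aemeasurable i), variance_fun_neg, hvar]
  have comparison := slepian hX.sumElim_neg (hY.sumElim_prod hY) hvar'
    (covariance_sumElim_neg_le_covariance_sumElim_prod hX hY hcov hnonneg) (Sum.elim t t)
  have two_sided_event : {ω | ∀ s, Sum.elim X (fun i ω ↦ -X i ω) s ω ≤ Sum.elim t t s}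
      = {ω | ∀ i, |X i ω| ≤ t i} := by
    ext ω
    simp [abs_le', forall_and]
  have product_event :
      {p | ∀ s, Sum.elim (fun i p ↦ Y i p.1) (fun i p ↦ Y i p.2) s p ≤ Sum.elim t t s}
        = {ω | ∀ i, Y i ω ≤ t i} ×ˢ {ω | ∀ i, Y i ω ≤ t i} := by
    ext p
    simp
  rwa [two_sided_event, product_event, measureReal_prod_prod, ← sq] at comparison

end SlepianComparison

section OneFactorModel

variable {ι : Type*}

/-- The law of a standard Gaussian common factor together with an independent family of independent
standard Gaussians indexed by `ι`. -/
noncomputable abbrev oneFactorMeasure (ι : Type*) [Fintype ι] : Measure (ℝ × (ι → ℝ)) :=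
  (gaussianReal 0 1).prod (Measure.pi fun _ ↦ gaussianReal 0 1)

/-- The one-factor representation of the standard Gaussian vector whose pairwise correlations all
equal `ρ`: under `oneFactorMeasure ι` the first coordinate of `ω` is the common factor. -/
noncomputable def equicorrelated (ρ : ℝ) (i : ι) (ω : ℝ × (ι → ℝ)) : ℝ :=
  √ρ * ω.1 + √(1 - ρ) * ω.2 i

@[fun_prop]
lemma measurable_equicorrelated (ρ : ℝ) (i : ι) : Measurable (equicorrelated ρ i) := by
  unfold equicorrelated
  fun_prop

variable [Fintype ι]

lemma isGaussian_pi_gaussianReal (m : ℝ) (v : NNReal) :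
    IsGaussian (Measure.pi fun _ : ι ↦ gaussianReal m v) := by
  have hindep := iIndepFun_pi (μ := fun _ : ι ↦ gaussianReal m v) (X := fun _ x ↦ x)
    fun _ ↦ aemeasurable_id'
  have hcoord (i : ι) :
      HasGaussianLaw (fun ξ : ι → ℝ ↦ ξ i) (Measure.pi fun _ ↦ gaussianReal m v) :=
    (measurePreserving_eval (fun _ : ι ↦ gaussianReal m v) i).hasLaw.hasGaussianLaw
  simpa using (hindep.hasGaussianLaw hcoord).isGaussian_map

lemma measurePreserving_snd_eval (i : ι) :
    MeasurePreserving (fun ω : ℝ × (ι → ℝ) ↦ ω.2 i) (oneFactorMeasure ι) (gaussianReal 0 1) :=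
  (measurePreserving_eval (fun _ : ι ↦ gaussianReal 0 1) i).comp measurePreserving_snd

lemma hasCenteredGaussianLaw_equicorrelated (ρ : ℝ) :
    HasCenteredGaussianLaw (equicorrelated (ι := ι) ρ) (oneFactorMeasure ι) where
  hasGaussianLaw := by
    have := isGaussian_pi_gaussianReal (ι := ι) 0 1
    have hid : HasGaussianLaw id (oneFactorMeasure ι) := IsGaussian.hasGaussianLaw_id
    exact hid.map_fun (ContinuousLinearMap.pi fun i ↦
      √ρ • ContinuousLinearMap.fst ℝ ℝ (ι → ℝ) +
        √(1 - ρ) • (ContinuousLinearMap.proj i).comp (ContinuousLinearMap.snd ℝ ℝ (ι → ℝ)))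
  integral_eq_zero i := by
    have hid : Integrable (fun x : ℝ ↦ x) (gaussianReal 0 1) :=
      memLp_one_iff_integrable.1 (memLp_id_gaussianReal 1)
    have hfst : Integrable (fun ω ↦ ω.1) (oneFactorMeasure ι) := hid.comp_fst _
    have hsnd : Integrable (fun ω ↦ ω.2 i) (oneFactorMeasure ι) :=
      (measurePreserving_snd_eval i).integrable_comp_of_integrable hid
    have hfst_mean : ∫ ω, ω.1 ∂oneFactorMeasure ι = 0 := by
      simpa using integral_fun_fst (ν := Measure.pi fun _ : ι ↦ gaussianReal 0 1)
        (μ := gaussianReal 0 1) fun x : ℝ ↦ x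
    have hsnd_mean : ∫ ω, ω.2 i ∂oneFactorMeasure ι = 0 :=
      (measurePreserving_snd_eval i).hasLaw.integral_eq.trans (by simp)
    unfold equicorrelated
    rw [integral_add (hfst.const_mul _) (hsnd.const_mul _), integral_const_mul,
      integral_const_mul, hfst_mean, hsnd_mean, mul_zero, mul_zero, add_zero]

lemma covariance_eval_eval_pi [DecidableEq ι] {μ : Measure ℝ} [IsProbabilityMeasure μ]
    (hμ : MemLp id 2 μ) (i j : ι) :
    cov[fun ξ ↦ ξ i, fun ξ ↦ ξ j; Measure.pi fun _ ↦ μ] = if i = j then Var[id; μ] else 0 := by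
  have hcoord (k : ι) := measurePreserving_eval (fun _ : ι ↦ μ) k
  split_ifs with hij
  · subst hij
    rw [covariance_self (measurable_pi_apply i).aemeasurable]
    exact (hcoord i).variance_fun_comp aemeasurable_id
  · exact ((iIndepFun_pi fun _ ↦ aemeasurable_id).indepFun hij).covariance_eq_zero
      (hμ.comp_measurePreserving (hcoord i)) (hμ.comp_measurePreserving (hcoord j))

lemma covariance_fst_add_snd_prod {Ω Ω' : Type*} [MeasurableSpace Ω] [MeasurableSpace Ω']
    {μ : Measure Ω} {ν : Measure Ω'} [IsProbabilityMeasure μ] [IsProbabilityMeasure ν]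
    {X X' : Ω → ℝ} {Y Y' : Ω' → ℝ} (hX : MemLp X 2 μ) (hX' : MemLp X' 2 μ)
    (hY : MemLp Y 2 ν) (hY' : MemLp Y' 2 ν) :
    cov[fun p ↦ X p.1 + Y p.2, fun p ↦ X' p.1 + Y' p.2; μ.prod ν]
      = cov[X, X'; μ] + cov[Y, Y'; ν] := by
  have hfst : cov[fun p ↦ X p.1, fun p ↦ X' p.1; μ.prod ν] = cov[X, X'; μ] :=
    measurePreserving_fst.hasLaw.covariance_fun_comp hX.aemeasurable hX'.aemeasurable
  have hsnd : cov[fun p ↦ Y p.2, fun p ↦ Y' p.2; μ.prod ν] = cov[Y, Y'; ν] :=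
    measurePreserving_snd.hasLaw.covariance_fun_comp hY.aemeasurable hY'.aemeasurable
  change cov[(fun p : Ω × Ω' ↦ X p.1) + fun p ↦ Y p.2,
    (fun p ↦ X' p.1) + fun p ↦ Y' p.2; μ.prod ν] = _
  rw [covariance_add_left (hX.comp_fst ν) (hY.comp_snd μ)
      ((hX'.comp_fst ν).add (hY'.comp_snd μ)),
    covariance_add_right (hX.comp_fst ν) (hX'.comp_fst ν) (hY'.comp_snd μ),
    covariance_add_right (hY.comp_snd μ) (hX'.comp_fst ν) (hY'.comp_snd μ),
    covariance_fst_snd_prod hX hY', covariance_comm (fun p : Ω × Ω' ↦ Y p.2) fun p ↦ X' p.1,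
    covariance_fst_snd_prod hX' hY, hfst, hsnd, add_zero, zero_add]

lemma covariance_equicorrelated [DecidableEq ι] {ρ : ℝ} (h0 : 0 ≤ ρ) (h1 : ρ ≤ 1) (i j : ι) :
    cov[equicorrelated ρ i, equicorrelated ρ j; oneFactorMeasure ι] = if i = j then 1 else ρ := by
  have hL2 : MemLp id 2 (gaussianReal 0 1) := memLp_id_gaussianReal 2
  have hcoord (k : ι) : MemLp (fun ξ ↦ ξ k) 2 (Measure.pi fun _ : ι ↦ gaussianReal 0 1) :=
    hL2.comp_measurePreserving (measurePreserving_eval _ k)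
  have hvar : cov[fun x ↦ x, fun x ↦ x; gaussianReal 0 1] = 1 := by
    rw [covariance_self aemeasurable_id', variance_fun_id_gaussianReal, NNReal.coe_one]
  have hsplit := covariance_fst_add_snd_prod (hL2.const_mul √ρ) (hL2.const_mul √ρ)
    ((hcoord i).const_mul √(1 - ρ)) ((hcoord j).const_mul √(1 - ρ))
  simp only [id] at hsplit
  unfold equicorrelated
  rw [hsplit, covariance_const_mul_left, covariance_const_mul_right, covariance_const_mul_left,
    covariance_const_mul_right, covariance_eval_eval_pi hL2, hvar, variance_id_gaussianReal,
    NNReal.coe_one, ← mul_assoc, ← mul_assoc, mul_self_sqrt h0, mul_self_sqrt (sub_nonneg.2 h1)]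
  split_ifs <;> ring

lemma measureReal_forall_equicorrelated_le {ρ : ℝ} (h1 : ρ < 1) (t : ℝ) :
    (oneFactorMeasure ι).real {ω | ∀ i, equicorrelated ρ i ω ≤ t}
      = ∫ z, cdf (gaussianReal 0 1) ((t - √ρ * z) / √(1 - ρ)) ^ Fintype.card ι
          ∂gaussianReal 0 1 := by
  have hs : 0 < √(1 - ρ) := sqrt_pos.2 (sub_pos.2 h1)
  have hmeas : MeasurableSet {ω : ℝ × (ι → ℝ) | ∀ i, equicorrelated ρ i ω ≤ t} := by
    rw [Set.ofPred_forall]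
    exact .iInter fun i ↦ measurableSet_le (by fun_prop) measurable_const
  have hsection (z : ℝ) : Prod.mk z ⁻¹' {ω : ℝ × (ι → ℝ) | ∀ i, equicorrelated ρ i ω ≤ t}
      = Set.univ.pi fun _ ↦ Set.Iic ((t - √ρ * z) / √(1 - ρ)) := by
    ext ξ
    simp only [Set.mem_preimage, Set.mem_ofPred_eq, Set.mem_univ_pi, Set.mem_Iic, equicorrelated,
      le_div_iff₀ hs, le_sub_iff_add_le', mul_comm (ξ _)]
  rw [measureReal_def, Measure.prod_apply hmeas,
    ← integral_toReal (measurable_measure_prodMk_left hmeas).aemeasurable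
      (.of_forall fun _ ↦ measure_lt_top _ _)]
  refine integral_congr_ae (.of_forall fun z ↦ ?_)
  simp only [hsection, Measure.pi_pi, cdf_eq_real, measureReal_def, Finset.prod_const,
    ENNReal.toReal_pow, Finset.card_univ]

end OneFactorModel

section GaussianTail

local notation "Φ" => cdf (gaussianReal 0 1)

lemma gaussianPDFReal_zero_one (x : ℝ) :
    gaussianPDFReal 0 1 x = (√(2 * π))⁻¹ * exp (-x ^ 2 / 2) := by
  simp [gaussianPDFReal_def]

/-- The constant of the Mills-type bound `cdf_gaussianReal_le_one_sub`, obtained by keeping only the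
interval `(w, w + 1 / (1 + w)]` of the tail: there the density is at least
`exp (-3 / 2) * exp (-w ^ 2 / 2) / √(2 * π)`. -/
noncomputable def millsConst : ℝ := (√(2 * π))⁻¹ * exp (-3 / 2)

lemma millsConst_pos : 0 < millsConst := by unfold millsConst; positivity

lemma millsConst_mul_exp_le_gaussianPDFReal {w x : ℝ} (hw : 0 ≤ w)
    (hx : x ∈ Set.Ioc w (w + (1 + w)⁻¹)) :
    millsConst * exp (-w ^ 2 / 2) ≤ gaussianPDFReal 0 1 x := by
  rw [gaussianPDFReal_zero_one, millsConst, mul_assoc, ← exp_add]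
  gcongr
  have hinv : (1 + w) * (1 + w)⁻¹ = 1 := mul_inv_cancel₀ (by positivity)
  have hinv_nonneg : 0 ≤ (1 + w)⁻¹ := by positivity
  have hinv_le : (1 + w)⁻¹ ≤ 1 := by nlinarith
  have hsq : x ^ 2 ≤ (w + (1 + w)⁻¹) ^ 2 := pow_le_pow_left₀ (hw.trans hx.1.le) hx.2 2
  nlinarith [hinv, hinv_le, hsq]

lemma cdf_gaussianReal_le_one_sub {w : ℝ} (hw : 0 ≤ w) :
    Φ w ≤ 1 - millsConst / (1 + w) * exp (-w ^ 2 / 2) := by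
  set s := Set.Ioc w (w + (1 + w)⁻¹)
  have hdisj : Disjoint (Set.Iic w) s := Set.Iic_disjoint_Ioc le_rfl
  have hadd : Φ w + (gaussianReal 0 1).real s ≤ 1 := by
    rw [cdf_eq_real, ← measureReal_union hdisj measurableSet_Ioc]
    exact measureReal_le_one
  have htail : millsConst / (1 + w) * exp (-w ^ 2 / 2) ≤ (gaussianReal 0 1).real s := by
    calc millsConst / (1 + w) * exp (-w ^ 2 / 2)
        = millsConst * exp (-w ^ 2 / 2) * volume.real s := by
          rw [Real.volume_real_Ioc_of_le (le_add_of_nonneg_right (by positivity))]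
          ring
      _ ≤ ∫ x in s, gaussianPDFReal 0 1 x :=
          setIntegral_ge_of_const_le_real measurableSet_Ioc (by simp [s])
            (fun x hx ↦ millsConst_mul_exp_le_gaussianPDFReal hw hx)
            (integrable_gaussianPDFReal 0 1).integrableOn
      _ = (gaussianReal 0 1).real s := by
          rw [measureReal_def, gaussianReal_apply_eq_integral 0 one_ne_zero,
            ENNReal.toReal_ofReal (integral_nonneg fun x ↦ gaussianPDFReal_nonneg 0 1 x)]
  linarith

lemma pow_le_exp_neg_mul {x q : ℝ} (hx : 0 ≤ x) (hxq : x ≤ 1 - q) (n : ℕ) :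
    x ^ n ≤ exp (-(n * q)) :=
  calc x ^ n ≤ exp (-q) ^ n := pow_le_pow_left₀ hx (hxq.trans (one_sub_le_exp_neg q)) n
    _ = exp (-(n * q)) := by rw [← exp_nat_mul, mul_neg]

lemma cdf_gaussianReal_pow_le_of_nonpos_s8 {w : ℝ} (hw : w ≤ 0) (n : ℕ) :
    Φ w ^ n ≤ exp (-(n * millsConst)) := by
  refine pow_le_exp_neg_mul (cdf_nonneg _ w) ((monotone_cdf _ hw).trans ?_) n
  simpa using cdf_gaussianReal_le_one_sub le_rfl

lemma log_div_self_mem_Icc {u : ℝ} (hu : 1 ≤ u) : log u / u ∈ Set.Icc 0 1 :=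
  ⟨div_nonneg (log_nonneg hu) (by linarith),
    (div_le_one (by linarith)).2 ((log_le_sub_one_of_pos (by linarith)).trans (by linarith))⟩

-- The correction `log u / u` gains the factor `u` that the Mills bound loses.
lemma mul_exp_le_exp_sq_sub_sq {u w : ℝ} (hu : 2 ≤ u) (hw : 0 ≤ w) (hwu : w ≤ u - log u / u) :
    u * exp (-1 / 2) * exp (u * (u - log u / u - w) / 4) ≤ exp (u ^ 2 / 2) * exp (-w ^ 2 / 2) := by
  have hupos : 0 < u := by linarith
  obtain ⟨hl0, hl1⟩ := log_div_self_mem_Icc (show 1 ≤ u by linarith)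
  have hlu : log u / u * u = log u := div_mul_cancel₀ _ hupos.ne'
  set l := log u / u
  have hsq_l : l ^ 2 ≤ 1 := pow_le_one₀ hl0 hl1
  have hcross : (u - l - w) * (u / 2) ≤ (u - l - w) * (u - l + w) :=
    mul_le_mul_of_nonneg_left (by linarith) (by linarith)
  calc u * exp (-1 / 2) * exp (u * (u - l - w) / 4)
      = exp (log u + -1 / 2 + u * (u - l - w) / 4) := by rw [exp_add, exp_add, exp_log hupos]
    _ ≤ exp (u ^ 2 / 2 + -w ^ 2 / 2) := by
        rw [exp_le_exp, ← hlu]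
        linear_combination hcross / 2 + hsq_l / 2
    _ = exp (u ^ 2 / 2) * exp (-w ^ 2 / 2) := exp_add _ _

lemma cdf_gaussianReal_pow_le_exp_neg_exp {n : ℕ} {u w : ℝ} (hn : (n : ℝ) = exp (u ^ 2 / 2))
    (hu : 2 ≤ u) (hw : 0 ≤ w) (hwu : w ≤ u - log u / u) :
    Φ w ^ n ≤ exp (-(millsConst / 2 * exp (-1 / 2) * exp (u * (u - log u / u - w) / 4))) := by
  have hκ := millsConst_pos
  have hl := log_div_self_mem_Icc (show 1 ≤ u by linarith)
  refine (pow_le_exp_neg_mul (cdf_nonneg _ w) (cdf_gaussianReal_le_one_sub hw) n).trans ?_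
  rw [exp_le_exp, neg_le_neg_iff, hn]
  calc millsConst / 2 * exp (-1 / 2) * exp (u * (u - log u / u - w) / 4)
      = millsConst / (2 * u) * (u * exp (-1 / 2) * exp (u * (u - log u / u - w) / 4)) := by
        field_simp
    _ ≤ millsConst / (1 + w) * (exp (u ^ 2 / 2) * exp (-w ^ 2 / 2)) := by
        refine mul_le_mul ?_ (mul_exp_le_exp_sq_sub_sq hu hw hwu) (by positivity) (by positivity)
        gcongr
        linarith [hl.1]
    _ = exp (u ^ 2 / 2) * (millsConst / (1 + w) * exp (-w ^ 2 / 2)) := by ring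

lemma exists_exp_neg_mul_exp_le {k : ℝ} (hk : 0 < k) (p : ℝ) :
    ∃ M : ℝ, 1 ≤ M ∧ ∀ v, 0 ≤ v → exp (-(k * exp v)) ≤ M * exp (-(p * v)) := by
  obtain ⟨N, hN⟩ := exists_nat_ge p
  refine ⟨max 1 (N.factorial / k ^ N), le_max_left _ _, fun v hv ↦ ?_⟩
  calc exp (-(k * exp v)) = (exp (k * exp v))⁻¹ := exp_neg _
    _ ≤ ((k * exp v) ^ N / N.factorial)⁻¹ :=
        inv_anti₀ (by positivity) (pow_div_factorial_le_exp _ (by positivity) N)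
    _ = N.factorial / k ^ N * exp (-(N * v)) := by
        rw [mul_pow, ← exp_nat_mul, exp_neg]
        field_simp
    _ ≤ max 1 (N.factorial / k ^ N) * exp (-(p * v)) := by
        gcongr
        exact le_max_right _ _

end GaussianTail

section LaplaceMethod

local notation "Φ" => cdf (gaussianReal 0 1)

/-- The point near which `y ↦ exp (-y ^ 2 / 2) * Φ (δ * u + y / c) ^ n` is largest when
`n = exp (u ^ 2 / 2)`: there the argument of the Gaussian distribution function `Φ` equals
`u - log u / u`, below which the power is already doubly exponentially small. -/
noncomputable def laplacePoint (c δ u : ℝ) : ℝ := c * ((1 - δ) * u - log u / u)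

lemma exp_neg_sq_div_two_le_of_ge {b y z : ℝ} (hbz : b ≤ z) (hzy : z ≤ y) :
    exp (-y ^ 2 / 2) ≤ exp (-z ^ 2 / 2) * exp (-(b * |y - z|)) := by
  rw [← exp_add, exp_le_exp, abs_of_nonneg (sub_nonneg.2 hzy)]
  nlinarith [mul_le_mul_of_nonneg_right hbz (sub_nonneg.2 hzy), sq_nonneg (y - z)]

lemma exp_neg_sq_div_two_le_of_le {a y z : ℝ} (hza : z ≤ a) (hyz : y ≤ z) :
    exp (-y ^ 2 / 2) ≤ exp (-z ^ 2 / 2) * exp (a * (z - y)) := by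
  rw [← exp_add, exp_le_exp]
  nlinarith [mul_le_mul_of_nonneg_right hza (sub_nonneg.2 hyz), sq_nonneg (y - z)]

variable {c δ u : ℝ}

lemma mul_le_laplacePoint (hc : 0 < c) (hδu : 2 ≤ (1 - δ) * u) (hu : 2 ≤ u) :
    c * (1 - δ) / 2 * u ≤ laplacePoint c δ u := by
  have hl := (log_div_self_mem_Icc (show 1 ≤ u by linarith)).2
  unfold laplacePoint
  nlinarith

lemma laplacePoint_le_mul (hc : 0 < c) (hδ : 0 ≤ δ) (hu : 2 ≤ u) : laplacePoint c δ u ≤ c * u := by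
  have hl := (log_div_self_mem_Icc (show 1 ≤ u by linarith)).1
  unfold laplacePoint
  gcongr
  nlinarith

lemma exp_neg_sq_mul_cdf_pow_le_of_le_laplacePoint {n : ℕ} {y M : ℝ}
    (hn : (n : ℝ) = exp (u ^ 2 / 2)) (hc : 0 < c) (hδ : 0 ≤ δ) (hu : 2 ≤ u)
    (hM : ∀ v, 0 ≤ v → exp (-(millsConst / 2 * exp (-1 / 2) * exp v))
      ≤ M * exp (-(4 * (c ^ 2 + 1) * v)))
    (hy : y ≤ laplacePoint c δ u) (hw : 0 ≤ δ * u + y / c) :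
    exp (-y ^ 2 / 2) * Φ (δ * u + y / c) ^ n
      ≤ M * exp (-laplacePoint c δ u ^ 2 / 2) * exp (-(1 / c * u * |y - laplacePoint c δ u|)) := by
  set z := laplacePoint c δ u with hz
  set w := δ * u + y / c with hw_def
  have hdist : u - log u / u - w = (z - y) / c := by
    rw [hz, hw_def, laplacePoint]
    field_simp
    ring
  have hdist_nonneg : 0 ≤ (z - y) / c := div_nonneg (sub_nonneg.2 hy) hc.le
  have hpow : Φ w ^ n ≤ M * exp (-((c ^ 2 + 1) * (u * ((z - y) / c)))) := by
    refine (cdf_gaussianReal_pow_le_exp_neg_exp hn hu hw (by linarith)).trans ?_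
    rw [hdist]
    refine (hM _ (by positivity)).trans_eq ?_
    ring_nf
  calc exp (-y ^ 2 / 2) * Φ w ^ n
      ≤ exp (-z ^ 2 / 2) * exp (c * u * (z - y)) *
          (M * exp (-((c ^ 2 + 1) * (u * ((z - y) / c))))) := by
        gcongr
        · exact pow_nonneg (cdf_nonneg _ w) n
        · exact exp_neg_sq_div_two_le_of_le (laplacePoint_le_mul hc hδ hu) hy
    _ = M * exp (-z ^ 2 / 2) *
          (exp (c * u * (z - y)) * exp (-((c ^ 2 + 1) * (u * ((z - y) / c))))) := by ring
    _ = M * exp (-z ^ 2 / 2) * exp (-(1 / c * u * |y - z|)) := by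
        rw [← exp_add, abs_sub_comm, abs_of_nonneg (sub_nonneg.2 hy)]
        congr 2
        field_simp
        ring

theorem exists_exp_neg_sq_mul_cdf_pow_le (hc : 0 < c) (hδ : δ ∈ Set.Ico 0 1) :
    ∃ M b : ℝ, 1 ≤ M ∧ 0 < b ∧ ∀ (n : ℕ) (u : ℝ), 2 / (1 - δ) ≤ u → (n : ℝ) = exp (u ^ 2 / 2) →
      ∀ y, exp (-y ^ 2 / 2) * Φ (δ * u + y / c) ^ n ≤
        exp (-(n * millsConst)) * exp (-y ^ 2 / 2) +
          M * exp (-laplacePoint c δ u ^ 2 / 2) * exp (-(b * u * |y - laplacePoint c δ u|)) := by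
  obtain ⟨M, hM_one, hM⟩ := exists_exp_neg_mul_exp_le
    (k := millsConst / 2 * exp (-1 / 2)) (by have := millsConst_pos; positivity) (4 * (c ^ 2 + 1))
  have hd : 0 < 1 - δ := sub_pos.2 hδ.2
  refine ⟨M, min (1 / c) (c * (1 - δ) / 2), hM_one, by positivity, fun n u hu hn y ↦ ?_⟩
  set b := min (1 / c) (c * (1 - δ) / 2)
  set z := laplacePoint c δ u
  have hδu : 2 ≤ (1 - δ) * u := by rw [div_le_iff₀ hd] at hu; linarith
  have hu2 : 2 ≤ u := by nlinarith [hδ.1]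
  have hbulk : 0 ≤ exp (-(n * millsConst)) * exp (-y ^ 2 / 2) := by positivity
  have hpeak : 0 ≤ M * exp (-z ^ 2 / 2) * exp (-(b * u * |y - z|)) := by positivity
  rcases le_total z y with hy | hy
  · refine le_add_of_nonneg_of_le hbulk ?_
    have hbz : b * u ≤ z := le_trans (by gcongr; exact min_le_right _ _)
      (mul_le_laplacePoint hc hδu hu2)
    calc exp (-y ^ 2 / 2) * Φ (δ * u + y / c) ^ n ≤ exp (-y ^ 2 / 2) * 1 := by
          gcongr
          exact pow_le_one₀ (cdf_nonneg _ _) (cdf_le_one _ _)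
      _ ≤ M * (exp (-z ^ 2 / 2) * exp (-(b * u * |y - z|))) := by
          rw [mul_one]
          exact (exp_neg_sq_div_two_le_of_ge hbz hy).trans
            (le_mul_of_one_le_left (by positivity) hM_one)
      _ = M * exp (-z ^ 2 / 2) * exp (-(b * u * |y - z|)) := by ring
  rcases le_total 0 (δ * u + y / c) with hw | hw
  · refine le_add_of_nonneg_of_le hbulk
      ((exp_neg_sq_mul_cdf_pow_le_of_le_laplacePoint hn hc hδ.1 hu2 hM hy hw).trans ?_)
    gcongr
    exact min_le_left _ _
  · refine le_add_of_le_of_nonneg ?_ hpeak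
    rw [mul_comm]
    gcongr
    exact cdf_gaussianReal_pow_le_of_nonpos_s8 hw n

end LaplaceMethod

section LaplaceIntegral

open Asymptotics Filter

local notation "Φ" => cdf (gaussianReal 0 1)

lemma integral_exp_neg_mul_abs_add {a : ℝ} (ha : 0 < a) (s : ℝ) :
    ∫ z, exp (-(a * |z + s|)) = 2 / a := by
  rw [integral_add_right_eq_self fun z ↦ exp (-(a * |z|)),
    integral_comp_abs (f := fun z ↦ exp (-(a * z)))]
  simp_rw [← neg_mul]
  rw [integral_exp_mul_Ioi (neg_lt_zero.2 ha)]
  simp [div_eq_mul_inv]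

lemma integrable_exp_neg_mul_abs_add {a : ℝ} (ha : 0 < a) (s : ℝ) :
    Integrable fun z ↦ exp (-(a * |z + s|)) :=
  .of_integral_ne_zero (by rw [integral_exp_neg_mul_abs_add ha]; positivity)

variable {c δ : ℝ}

lemma exists_integral_cdf_pow_le (hc : 0 < c) (hδ : δ ∈ Set.Ico 0 1) :
    ∃ M : ℝ, ∀ (n : ℕ) (u : ℝ), 2 / (1 - δ) ≤ u → (n : ℝ) = exp (u ^ 2 / 2) →
      ∫ z, Φ (δ * u - z / c) ^ n ∂gaussianReal 0 1 ≤
        exp (-(n * millsConst)) + M * (exp (-laplacePoint c δ u ^ 2 / 2) / u) := by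
  obtain ⟨M, b, hM, hb, hpointwise⟩ := exists_exp_neg_sq_mul_cdf_pow_le hc hδ
  refine ⟨M * (2 / b), fun n u hu hn ↦ ?_⟩
  set z₀ := laplacePoint c δ u
  have hupos : 0 < u := (div_pos two_pos (sub_pos.2 hδ.2)).trans_le hu
  have hsqrt : (√(2 * π))⁻¹ ≤ 1 :=
    inv_le_one_of_one_le₀ (one_le_sqrt.2 (by linarith [pi_gt_three]))
  have hdensity z : gaussianPDFReal 0 1 z * Φ (δ * u - z / c) ^ n ≤
      exp (-(n * millsConst)) * gaussianPDFReal 0 1 z +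
        M * exp (-z₀ ^ 2 / 2) * exp (-(b * u * |z + z₀|)) := by
    have hz := hpointwise n u hu hn (-z)
    rw [neg_sq, neg_div c z, ← sub_eq_add_neg, ← neg_add', abs_neg] at hz
    rw [gaussianPDFReal_zero_one, mul_assoc]
    refine (mul_le_mul_of_nonneg_left hz (by positivity)).trans ?_
    rw [mul_add, mul_left_comm]
    exact add_le_add_right (mul_le_of_le_one_left (by positivity) hsqrt) _
  have hint_bulk := (integrable_gaussianPDFReal 0 1).const_mul (exp (-(n * millsConst)))
  have hint_peak := (integrable_exp_neg_mul_abs_add (mul_pos hb hupos) z₀).const_mul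
    (M * exp (-z₀ ^ 2 / 2))
  calc ∫ z, Φ (δ * u - z / c) ^ n ∂gaussianReal 0 1
      = ∫ z, gaussianPDFReal 0 1 z * Φ (δ * u - z / c) ^ n := by
        simp_rw [integral_gaussianReal_eq_integral_smul one_ne_zero, smul_eq_mul]
    _ ≤ ∫ z, (exp (-(n * millsConst)) * gaussianPDFReal 0 1 z +
          M * exp (-z₀ ^ 2 / 2) * exp (-(b * u * |z + z₀|))) :=
        integral_mono_of_nonneg
          (.of_forall fun z ↦ mul_nonneg (gaussianPDFReal_nonneg 0 1 z)
            (pow_nonneg (cdf_nonneg _ _) n))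
          (hint_bulk.add hint_peak) (.of_forall hdensity)
    _ = exp (-(n * millsConst)) + M * (2 / b) * (exp (-z₀ ^ 2 / 2) / u) := by
        rw [integral_add hint_bulk hint_peak, integral_const_mul, integral_const_mul,
          integral_gaussianPDFReal_eq_one 0 one_ne_zero,
          integral_exp_neg_mul_abs_add (mul_pos hb hupos)]
        field_simp

lemma exp_neg_laplacePoint_sq_div_le {u : ℝ} (hu : 0 < u) :
    exp (-laplacePoint c δ u ^ 2 / 2) / u ≤
      exp (u ^ 2 / 2) ^ (-(c ^ 2 * (1 - δ) ^ 2)) * u ^ (c ^ 2 * (1 - δ) - 1) := by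
  calc exp (-laplacePoint c δ u ^ 2 / 2) / u
      = exp (-laplacePoint c δ u ^ 2 / 2 - log u) := by rw [exp_sub, exp_log hu]
    _ ≤ exp (u ^ 2 / 2 * -(c ^ 2 * (1 - δ) ^ 2) + log u * (c ^ 2 * (1 - δ) - 1)) := by
        have hlu : log u / u * u = log u := div_mul_cancel₀ _ hu.ne'
        rw [exp_le_exp, laplacePoint]
        linear_combination (c ^ 2 * (1 - δ)) * hlu + sq_nonneg (c * (log u / u)) / 2
    _ = _ := by rw [exp_add, exp_mul, rpow_def_of_pos hu]

lemma exp_neg_laplacePoint_sq_div_isBigO (c δ : ℝ) :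
    (fun x ↦ exp (-laplacePoint c δ √(2 * log x) ^ 2 / 2) / √(2 * log x)) =O[atTop]
      fun x ↦ x ^ (-(c ^ 2 * (1 - δ) ^ 2)) * log x ^ ((c ^ 2 * (1 - δ) - 1) / 2) := by
  set β := c ^ 2 * (1 - δ)
  refine .of_bound (2 ^ ((β - 1) / 2)) ?_
  filter_upwards [eventually_gt_atTop 1] with x hx
  have hlog : 0 < log x := log_pos hx
  have hexp : exp (√(2 * log x) ^ 2 / 2) = x := by
    rw [sq_sqrt (by positivity), mul_div_cancel_left₀ _ two_ne_zero, exp_log (by positivity)]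
  have hpow : √(2 * log x) ^ (β - 1) = 2 ^ ((β - 1) / 2) * log x ^ ((β - 1) / 2) := by
    rw [sqrt_eq_rpow, ← rpow_mul (by positivity), one_div_mul_eq_div,
      mul_rpow two_pos.le hlog.le]
  rw [norm_of_nonneg (by positivity), norm_of_nonneg (by positivity), mul_left_comm, ← hpow]
  exact (exp_neg_laplacePoint_sq_div_le (by positivity)).trans_eq (by rw [hexp])

lemma exp_neg_mul_isBigO_rpow_mul_log_rpow {k : ℝ} (hk : 0 < k) (a s : ℝ) :
    (fun x ↦ exp (-(x * k))) =O[atTop] fun x ↦ x ^ a * log x ^ s := by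
  have hexp : (fun x ↦ exp (-(x * k))) =O[atTop] fun x ↦ x ^ (a - 1) := by
    simpa only [mul_comm, mul_neg] using (isLittleO_exp_neg_mul_rpow_atTop hk (a - 1)).isBigO
  have hlog : (fun x : ℝ ↦ (x ^ (1 : ℝ))⁻¹) =O[atTop] fun x ↦ (log x ^ (-s))⁻¹ := by
    refine (isLittleO_log_rpow_rpow_atTop (-s) one_pos).isBigO.inv_rev ?_
    filter_upwards [eventually_gt_atTop 1] with x hx h
    exact absurd h (rpow_pos_of_pos (log_pos hx) _).ne'
  refine hexp.trans (((isBigO_refl (fun x : ℝ ↦ x ^ a) atTop).mul hlog).congr' ?_ ?_)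
  · filter_upwards [eventually_gt_atTop 0] with x hx
    rw [← rpow_neg hx.le, ← rpow_add hx, ← sub_eq_add_neg]
  · filter_upwards [eventually_gt_atTop 1] with x hx
    rw [rpow_neg (log_pos hx).le, inv_inv]

theorem integral_cdf_pow_isBigO (hc : 0 < c) (hδ : δ ∈ Set.Ico 0 1) :
    (fun n : ℕ ↦ ∫ z, Φ (δ * √(2 * log n) - z / c) ^ n ∂gaussianReal 0 1) =O[atTop]
      fun n : ℕ ↦ (n : ℝ) ^ (-(c ^ 2 * (1 - δ) ^ 2)) * log n ^ ((c ^ 2 * (1 - δ) - 1) / 2) := by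
  obtain ⟨M, hM⟩ := exists_integral_cdf_pow_le hc hδ
  have hu : Tendsto (fun n : ℕ ↦ √(2 * log n)) atTop atTop :=
    tendsto_sqrt_atTop.comp
      ((tendsto_log_atTop.comp tendsto_natCast_atTop_atTop).const_mul_atTop two_pos)
  have hbulk := (exp_neg_mul_isBigO_rpow_mul_log_rpow millsConst_pos (-(c ^ 2 * (1 - δ) ^ 2))
    ((c ^ 2 * (1 - δ) - 1) / 2)).comp_tendsto (tendsto_natCast_atTop_atTop (R := ℝ))
  have hpeak := (exp_neg_laplacePoint_sq_div_isBigO c δ).comp_tendsto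
    (tendsto_natCast_atTop_atTop (R := ℝ))
  refine IsBigO.trans (.of_norm_eventuallyLE ?_) (hbulk.add (hpeak.const_mul_left M))
  filter_upwards [hu.eventually_ge_atTop (2 / (1 - δ)), eventually_ge_atTop 1] with n hn hn1
  rw [norm_of_nonneg (integral_nonneg fun z ↦ pow_nonneg (cdf_nonneg _ _) n)]
  refine hM n _ hn ?_
  rw [sq_sqrt (mul_nonneg two_pos.le (log_natCast_nonneg n)), mul_div_cancel_left₀ _ two_ne_zero,
    exp_log (by positivity)]

end LaplaceIntegral

theorem exists_measureReal_equicorrelated_le {δ ρ : ℝ} (hδ : δ ∈ Set.Ico 0 1)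
    (hρ : ρ ∈ Set.Ioo 0 1) :
    ∃ C : ℝ, 0 < C ∧ ∀ n : ℕ, 2 ≤ n →
      (oneFactorMeasure (Fin n)).real
          {ω | ∀ i, equicorrelated ρ i ω ≤ δ * √(2 * (1 - ρ) * log n)}
        ≤ C * (n : ℝ) ^ (-((1 - ρ) * (1 - δ) ^ 2 / ρ))
          * log n ^ (((1 - ρ) * (1 - δ) / ρ - 1) / 2) := by
  have hs : 0 < √(1 - ρ) := sqrt_pos.2 (sub_pos.2 hρ.2)
  have hr : 0 < √ρ := sqrt_pos.2 hρ.1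
  have hc_sq : (√(1 - ρ) / √ρ) ^ 2 = (1 - ρ) / ρ := by
    rw [div_pow, sq_sqrt (sub_pos.2 hρ.2).le, sq_sqrt hρ.1.le]
  obtain ⟨C, hC, hbound⟩ :=
    Asymptotics.bound_of_isBigO_nat_atTop (integral_cdf_pow_isBigO (div_pos hs hr) hδ)
  refine ⟨C, hC, fun n hn ↦ ?_⟩
  have hlog : 0 < log n := log_pos (by exact_mod_cast hn)
  have hrate : 0 < (n : ℝ) ^ (-((√(1 - ρ) / √ρ) ^ 2 * (1 - δ) ^ 2))
      * log n ^ (((√(1 - ρ) / √ρ) ^ 2 * (1 - δ) - 1) / 2) := by positivity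
  have harg (z : ℝ) : (δ * √(2 * (1 - ρ) * log n) - √ρ * z) / √(1 - ρ)
      = δ * √(2 * log n) - z / (√(1 - ρ) / √ρ) := by
    rw [mul_right_comm, sqrt_mul (by positivity)]
    field_simp
  calc (oneFactorMeasure (Fin n)).real
          {ω | ∀ i, equicorrelated ρ i ω ≤ δ * √(2 * (1 - ρ) * log n)}
      ≤ C * ((n : ℝ) ^ (-((√(1 - ρ) / √ρ) ^ 2 * (1 - δ) ^ 2))
          * log n ^ (((√(1 - ρ) / √ρ) ^ 2 * (1 - δ) - 1) / 2)) := by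
        simp_rw [measureReal_forall_equicorrelated_le hρ.2, harg, Fintype.card_fin]
        exact (le_norm_self _).trans ((hbound hrate.ne').trans_eq (by rw [norm_of_nonneg hrate.le]))
    _ = _ := by rw [hc_sq, div_mul_eq_mul_div, div_mul_eq_mul_div, mul_assoc]

lemma sq_mul_rpow_mul_rpow {x y : ℝ} (hx : 0 ≤ x) (hy : 0 ≤ y) (C a b : ℝ) :
    (C * x ^ (-a) * y ^ (b / 2)) ^ 2 = C ^ 2 * x ^ (-(2 * a)) * y ^ b := by
  rw [mul_pow, mul_pow, ← rpow_mul_natCast hx, ← rpow_mul_natCast hy]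
  push_cast
  rw [div_mul_cancel₀ b two_ne_zero, neg_mul, mul_comm a]

lemma measure_ciSup_le_le_ofReal {Ω ι : Type*} [MeasurableSpace Ω] [Finite ι] {μ : Measure Ω}
    [IsFiniteMeasure μ] {f : ι → Ω → ℝ} {t p : ℝ} (h : μ.real {ω | ∀ i, f i ω ≤ t} ≤ p) :
    μ {ω | (⨆ i, f i ω) ≤ t} ≤ ENNReal.ofReal p := by
  have hsubset : {ω | (⨆ i, f i ω) ≤ t} ⊆ {ω | ∀ i, f i ω ≤ t} := fun ω hω i ↦
    (le_ciSup (Set.finite_range fun i ↦ f i ω).bddAbove i).trans hω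
  calc μ {ω | (⨆ i, f i ω) ≤ t} ≤ μ {ω | ∀ i, f i ω ≤ t} := measure_mono hsubset
    _ = ENNReal.ofReal (μ.real {ω | ∀ i, f i ω ≤ t}) := (ofReal_measureReal).symm
    _ ≤ ENNReal.ofReal p := ENNReal.ofReal_le_ofReal h

namespace IsCenteredGaussianVec

variable {Ω : Type*} [MeasureSpace Ω] {n : ℕ} {X : Fin n → Ω → ℝ} {R : Matrix (Fin n) (Fin n) ℝ}

lemma hasLaw_sum_mul (h : IsCenteredGaussianVec X R) (a : Fin n → ℝ) :
    HasLaw (fun ω ↦ ∑ i, a i * X i ω)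
      (gaussianReal 0 (∑ i, ∑ j, a i * R i j * a j).toNNReal) ℙ where
  aemeasurable :=
    (Finset.measurable_fun_sum _ fun i _ ↦ (h.1 i).const_mul (a i)).aemeasurable
  map_eq := h.2.2 a

lemma hasLaw (h : IsCenteredGaussianVec X R) (i : Fin n) : HasLaw (X i) (gaussianReal 0 1) ℙ := by
  simpa [Pi.single_apply, h.2.1] using h.hasLaw_sum_mul (Pi.single i 1)

lemma hasCenteredGaussianLaw (h : IsCenteredGaussianVec X R) :
    HasCenteredGaussianLaw X (ℙ : Measure Ω) where
  hasGaussianLaw := by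
    refine ⟨isGaussian_of_map_eq_gaussianReal fun L ↦ ?_⟩
    have hL : (fun ω ↦ L fun i ↦ X i ω) =
        fun ω ↦ ∑ i, L (fun j ↦ if i = j then 1 else 0) * X i ω := by
      funext ω
      simpa [mul_comm] using (L : (Fin n → ℝ) →ₗ[ℝ] ℝ).pi_apply_eq_sum_univ fun i ↦ X i ω
    rw [Measure.map_map L.measurable (measurable_pi_lambda _ h.1)]
    exact ⟨0, _, hL ▸ (h.hasLaw_sum_mul _).map_eq⟩
  integral_eq_zero i := by simpa using (h.hasLaw i).integral_eq

lemma variance_eq_one (h : IsCenteredGaussianVec X R) (i : Fin n) :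
    Var[X i; (ℙ : Measure Ω)] = 1 := by
  simpa using (h.hasLaw i).variance_eq

lemma variance_add_const_mul (h : IsCenteredGaussianVec X R) (i j : Fin n) (s : ℝ) :
    Var[fun ω ↦ X i ω + s * X j ω; (ℙ : Measure Ω)] = max (1 + s * (R i j + R j i) + s ^ 2) 0 := by
  have hform : ∑ k, ∑ l, (Pi.single i 1 + Pi.single j s : Fin n → ℝ) k * R k l *
      (Pi.single i 1 + Pi.single j s : Fin n → ℝ) l = 1 + s * (R i j + R j i) + s ^ 2 := by
    simp only [Pi.add_apply, add_mul, mul_add, Finset.sum_add_distrib, Pi.single_apply, ite_mul,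
      mul_ite, Finset.sum_ite_eq', Finset.mem_univ, if_true, zero_mul, mul_zero, one_mul, mul_one,
      h.2.1]
    ring
  have hlaw := h.hasLaw_sum_mul (Pi.single i 1 + Pi.single j s)
  rw [hform] at hlaw
  simpa [add_mul, Finset.sum_add_distrib, Pi.single_apply] using hlaw.variance_eq

-- The sign of the combination is chosen so that its prescribed variance is not truncated at `0`.
lemma covariance_eq_s8 (h : IsCenteredGaussianVec X R) (i j : Fin n) :
    cov[X i, X j; (ℙ : Measure Ω)] = (R i j + R j i) / 2 := by
  have hX := h.hasCenteredGaussianLaw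
  have := hX.isProbabilityMeasure
  have hexpand (s : ℝ) : Var[fun ω ↦ X i ω + s * X j ω; (ℙ : Measure Ω)]
      = 1 + 2 * (s * cov[X i, X j; (ℙ : Measure Ω)]) + s ^ 2 := by
    rw [variance_fun_add (hX.memLp_two i) ((hX.memLp_two j).const_mul s), variance_const_mul,
      covariance_const_mul_right, h.variance_eq_one, h.variance_eq_one, mul_one]
  rcases le_total 0 (R i j + R j i) with hR | hR
  · have hplus := h.variance_add_const_mul i j 1
    rw [hexpand, max_eq_left (by linarith)] at hplus
    linarith
  · have hminus := h.variance_add_const_mul i j (-1)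
    rw [hexpand, max_eq_left (by linarith)] at hminus
    linarith

variable {ρ : ℝ}

lemma variance_eq_variance_equicorrelated (h : IsCenteredGaussianVec X R) (hρ : ρ ∈ Set.Icc 0 1)
    (i : Fin n) : Var[X i; ℙ] = Var[equicorrelated ρ i; oneFactorMeasure (Fin n)] := by
  rw [h.variance_eq_one, ← covariance_self (measurable_equicorrelated ρ i).aemeasurable,
    covariance_equicorrelated hρ.1 hρ.2, if_pos rfl]

lemma covariance_le_covariance_equicorrelated (h : IsCenteredGaussianVec X R)
    (hρ : ρ ∈ Set.Icc 0 1) (hR : ∀ i j, i ≠ j → R i j ≤ ρ) (i j : Fin n) (hij : i ≠ j) :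
    cov[X i, X j; ℙ] ≤ cov[equicorrelated ρ i, equicorrelated ρ j; oneFactorMeasure (Fin n)] := by
  rw [h.covariance_eq_s8, covariance_equicorrelated hρ.1 hρ.2, if_neg hij]
  linarith [hR i j hij, hR j i hij.symm]

lemma measureReal_le_equicorrelated (h : IsCenteredGaussianVec X R) (hρ : ρ ∈ Set.Icc 0 1)
    (hR : ∀ i j, i ≠ j → R i j ≤ ρ) (t : ℝ) :
    (ℙ : Measure Ω).real {ω | ∀ i, X i ω ≤ t} ≤
      (oneFactorMeasure (Fin n)).real {ω | ∀ i, equicorrelated ρ i ω ≤ t} :=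
  slepian h.hasCenteredGaussianLaw (hasCenteredGaussianLaw_equicorrelated ρ)
    (h.variance_eq_variance_equicorrelated hρ) (h.covariance_le_covariance_equicorrelated hρ hR) _

lemma measureReal_abs_le_equicorrelated (h : IsCenteredGaussianVec X R) (hρ : ρ ∈ Set.Icc 0 1)
    (hR : ∀ i j, i ≠ j → R i j ∈ Set.Icc 0 ρ) (t : ℝ) :
    (ℙ : Measure Ω).real {ω | ∀ i, |X i ω| ≤ t} ≤
      (oneFactorMeasure (Fin n)).real {ω | ∀ i, equicorrelated ρ i ω ≤ t} ^ 2 := by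
  refine slepian_abs h.hasCenteredGaussianLaw (hasCenteredGaussianLaw_equicorrelated ρ)
    (h.variance_eq_variance_equicorrelated hρ)
    (h.covariance_le_covariance_equicorrelated hρ fun i j hij ↦ (hR i j hij).2)
    (fun i j hij ↦ ?_) _
  rw [h.covariance_eq_s8]
  linarith [(hR i j hij).1, (hR j i hij.symm).1]

end IsCenteredGaussianVec

/-- The constant `C` can be taken to be the same constant as in the one-sided
lower-tail bound: we assert the existence of a single `C > 0` that works
simultaneously for the one-sided bound (under `R i j ≤ ρ₀`) and for the
small-ball bound with `C ^ 2` (under `0 ≤ R i j ≤ ρ₀`). -/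
theorem small_ball_upper_bound_nonneg_corr (δ₀ ρ₀ : ℝ)
    (hδ : δ₀ ∈ Set.Ioo (0 : ℝ) 1) (hρ : ρ₀ ∈ Set.Ioo (0 : ℝ) 1) :
    ∃ C : ℝ, 0 < C ∧
      (∀ (Ω : Type) [MeasureSpace Ω], IsProbabilityMeasure (ℙ : Measure Ω) →
        ∀ (n : ℕ), 2 ≤ n →
          ∀ (X : Fin n → Ω → ℝ) (R : Matrix (Fin n) (Fin n) ℝ),
            IsCenteredGaussianVec X R →
            (∀ i j, i ≠ j → R i j ≤ ρ₀) →
            (ℙ : Measure Ω) {ω | (⨆ i, X i ω)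
                ≤ δ₀ * Real.sqrt (2 * (1 - ρ₀) * Real.log n)}
              ≤ ENNReal.ofReal
                  (C * (n : ℝ) ^ (-((1 - ρ₀) * (1 - δ₀) ^ 2 / ρ₀))
                    * Real.log n ^ (((1 - ρ₀) * (1 - δ₀) / ρ₀ - 1) / 2))) ∧
      (∀ (Ω : Type) [MeasureSpace Ω], IsProbabilityMeasure (ℙ : Measure Ω) →
        ∀ (n : ℕ), 2 ≤ n →
          ∀ (X : Fin n → Ω → ℝ) (R : Matrix (Fin n) (Fin n) ℝ),
            IsCenteredGaussianVec X R →
            (∀ i j, i ≠ j → 0 ≤ R i j ∧ R i j ≤ ρ₀) →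
            (ℙ : Measure Ω) {ω | (⨆ i, |X i ω|)
                ≤ δ₀ * Real.sqrt (2 * (1 - ρ₀) * Real.log n)}
              ≤ ENNReal.ofReal
                  (C ^ 2 * (n : ℝ) ^ (-(2 * ((1 - ρ₀) * (1 - δ₀) ^ 2 / ρ₀)))
                    * Real.log n ^ ((1 - ρ₀) * (1 - δ₀) / ρ₀ - 1))) := by
  obtain ⟨C, hC, hbound⟩ := exists_measureReal_equicorrelated_le (Set.Ioo_subset_Ico_self hδ) hρ
  have hρ' : ρ₀ ∈ Set.Icc 0 1 := Set.Ioo_subset_Icc_self hρ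
  refine ⟨C, hC, fun Ω _ _ n hn X R hX hR ↦ ?_, fun Ω _ _ n hn X R hX hR ↦ ?_⟩
  · exact measure_ciSup_le_le_ofReal
      ((hX.measureReal_le_equicorrelated hρ' hR _).trans (hbound n hn))
  · rw [← sq_mul_rpow_mul_rpow n.cast_nonneg (log_natCast_nonneg n)]
    exact measure_ciSup_le_le_ofReal ((hX.measureReal_abs_le_equicorrelated hρ' hR _).trans
      (pow_le_pow_left₀ measureReal_nonneg (hbound n hn) 2))
end
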